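/- There exists a constant C_p > 0 depending only on p such that for all t1, t2 ≥ 0 with t1 ≤ 1, t2 ≤ 1 and t1 + t2 ≤ 1, sup_{x ∈ ℝ} | P( S_n ≤ x · √( t1·⟨S⟩_n + t2·[S]_n + (1 − t1 − t2) ) ) − Φ(x) | ≤ C_p · N_n^{1/(2p+1)}. -/

import Mathlib

/-!
Lindeberg's replacement method along the heat flow: for `c ≥ ⟨S⟩_n`, `Φ ((z - S_k) / √(c - ⟨S⟩_k))`
is a martingale in `k` up to third order errors. Jumps above a threshold depending on the remaining
variance `c - ⟨S⟩_k` are paid for by the moments of order `2p`. Small jumps contribute a kernel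
concentrated near `z - S_k = 0`; the kernel is moved from `S_k` to the endpoint `S_n`, where the sum
over `k` telescopes along each path to a multiple of `max (ε, |z - S_n|) ^ (-q)`, with `q` conjugate
to `p`. The mean of this function is in turn bounded by the Kolmogorov distance `D` of `S_n` to the
normal law, and smoothing at a scale which is a large multiple of `ε` gives `D ≤ C ε + D / 2`.

Stopping reduces the case where `⟨S⟩_n` is only close to `1` in probability to that of
`⟨S⟩_n ≤ 1 + ε²`. An exponential supermartingale for the truncated squares shows that `[S]_n` is
close to `⟨S⟩_n`, so that all the normalizations are within `O(ε)` of `1`. All this holds whenever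
`N_n ≤ ε ^ (2p + 1)`, and equality gives the rate.
-/

open MeasureTheory Filter Finset

/-- The standard normal distribution function
`Φ(x) = (2π)^{-1/2} ∫_{-∞}^x e^{-u²/2} du`. -/
noncomputable def stdNormalCDF (x : ℝ) : ℝ :=
  ∫ u in Set.Iic x, (Real.sqrt (2 * Real.pi))⁻¹ * Real.exp (-u ^ 2 / 2)

namespace MartingaleBerryEsseen

open Real ProbabilityTheory

local notation "Φ" => stdNormalCDF
local notation "φ" => gaussianPDFReal 0 1

section Gaussian

lemma stdNormalPDF_eq (u : ℝ) : φ u = (√(2 * π))⁻¹ * exp (-u ^ 2 / 2) := by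
  simp [gaussianPDFReal]

lemma stdNormalPDF_nonneg (u : ℝ) : 0 ≤ φ u := gaussianPDFReal_nonneg 0 1 u

lemma continuous_stdNormalPDF : Continuous φ := by
  simp only [funext stdNormalPDF_eq]
  fun_prop

lemma stdNormalPDF_le_exp (u : ℝ) : φ u ≤ exp (-u ^ 2 / 2) := by
  rw [stdNormalPDF_eq]
  refine mul_le_of_le_one_left (exp_pos _).le (inv_le_one_of_one_le₀ ?_)
  exact one_le_sqrt.2 (by linarith [pi_gt_three])

lemma stdNormalPDF_le_one (u : ℝ) : φ u ≤ 1 :=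
  (stdNormalPDF_le_exp u).trans (exp_le_one_iff.2 (by nlinarith [sq_nonneg u]))

lemma hasDerivAt_stdNormalPDF (x : ℝ) : HasDerivAt φ (-x * φ x) x := by
  have h : HasDerivAt (fun u : ℝ => -u ^ 2 / 2) (-x) x :=
    ((hasDerivAt_pow 2 x).neg.div_const 2).congr_deriv (by simp; ring)
  simp only [funext stdNormalPDF_eq]
  exact (h.exp.const_mul (√(2 * π))⁻¹).congr_deriv (by ring)

lemma hasDerivAt_neg_mul_stdNormalPDF (x : ℝ) :
    HasDerivAt (fun t => -t * φ t) ((x ^ 2 - 1) * φ x) x :=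
  ((hasDerivAt_id x).neg.mul (hasDerivAt_stdNormalPDF x)).congr_deriv (by simp; ring)

lemma abs_neg_mul_stdNormalPDF_le_one (t : ℝ) : |-t * φ t| ≤ 1 := by
  have h : |t| ≤ exp (t ^ 2 / 2) := by
    nlinarith [add_one_le_exp (t ^ 2 / 2), sq_nonneg (|t| - 1), sq_abs t]
  calc |-t * φ t| = |t| * φ t := by rw [abs_mul, abs_neg, abs_of_nonneg (stdNormalPDF_nonneg t)]
    _ ≤ exp (t ^ 2 / 2) * exp (-t ^ 2 / 2) :=
        mul_le_mul h (stdNormalPDF_le_exp t) (stdNormalPDF_nonneg t) (exp_pos _).le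
    _ = 1 := by rw [← exp_add]; simp; ring

lemma stdNormalCDF_eq_gaussianReal (x : ℝ) : Φ x = (gaussianReal 0 1).real (Set.Iic x) := by
  rw [Measure.real, gaussianReal_apply_eq_integral 0 one_ne_zero,
    ENNReal.toReal_ofReal (integral_nonneg fun u => stdNormalPDF_nonneg u)]
  simp only [stdNormalPDF_eq, stdNormalCDF]

lemma stdNormalCDF_nonneg (x : ℝ) : 0 ≤ Φ x := by
  rw [stdNormalCDF_eq_gaussianReal]
  exact measureReal_nonneg

lemma stdNormalCDF_le_one (x : ℝ) : Φ x ≤ 1 := by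
  rw [stdNormalCDF_eq_gaussianReal]
  exact measureReal_le_one

lemma abs_stdNormalCDF_le_one (x : ℝ) : |Φ x| ≤ 1 :=
  abs_le.2 ⟨by linarith [stdNormalCDF_nonneg x], stdNormalCDF_le_one x⟩

lemma monotone_stdNormalCDF : Monotone Φ := fun a b h => by
  simp only [stdNormalCDF_eq_gaussianReal]
  exact measureReal_mono (Set.Iic_subset_Iic.2 h)

lemma measurable_stdNormalCDF : Measurable Φ := monotone_stdNormalCDF.measurable

lemma hasDerivAt_stdNormalCDF (x : ℝ) : HasDerivAt Φ (φ x) x := by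
  have hint : Integrable φ := integrable_gaussianPDFReal 0 1
  have h : Φ = fun y => Φ 0 + ∫ u in (0 : ℝ)..y, φ u := by
    funext y
    rw [← intervalIntegral.integral_Iic_sub_Iic hint.integrableOn hint.integrableOn]
    simp only [stdNormalCDF, stdNormalPDF_eq]
    ring
  rw [h]
  exact (intervalIntegral.integral_hasDerivAt_right
    (continuous_stdNormalPDF.intervalIntegrable _ _)
    continuous_stdNormalPDF.stronglyMeasurable.stronglyMeasurableAtFilter
    continuous_stdNormalPDF.continuousAt).const_add _

lemma abs_stdNormalCDF_sub_le (x y : ℝ) : |Φ x - Φ y| ≤ |x - y| := by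
  have h := convex_univ.norm_image_sub_le_of_norm_hasDerivWithin_le (C := 1)
    (fun u _ => (hasDerivAt_stdNormalCDF u).hasDerivWithinAt)
    (fun u _ => by
      rw [norm_eq_abs, abs_of_nonneg (stdNormalPDF_nonneg u)]
      exact stdNormalPDF_le_one u)
    (Set.mem_univ y) (Set.mem_univ x)
  simpa using h

lemma gaussianReal_real_le_abs_le {y : ℝ} (hy : 0 < y) :
    (gaussianReal 0 1).real {u | y ≤ |u|} ≤ 1 / y ^ 2 := by
  have h := meas_ge_le_variance_div_sq (memLp_id_gaussianReal (μ := 0) (v := 1) 2) hy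
  rw [variance_id_gaussianReal] at h
  simp only [id_eq, integral_id_gaussianReal, sub_zero, NNReal.coe_one] at h
  exact ENNReal.toReal_le_of_le_ofReal (by positivity) h

lemma stdNormalCDF_neg_le {y : ℝ} (hy : 0 < y) : Φ (-y) ≤ 1 / y ^ 2 := by
  rw [stdNormalCDF_eq_gaussianReal]
  refine (measureReal_mono fun u (hu : u ≤ -y) => ?_).trans (gaussianReal_real_le_abs_le hy)
  exact le_abs.2 (Or.inr (le_neg_of_le_neg hu))

lemma one_sub_stdNormalCDF_le {y : ℝ} (hy : 0 < y) : 1 - Φ y ≤ 1 / y ^ 2 := by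
  rw [stdNormalCDF_eq_gaussianReal, ← probReal_compl_eq_one_sub measurableSet_Iic]
  refine (measureReal_mono fun u (hu : ¬ u ≤ y) => ?_).trans (gaussianReal_real_le_abs_le hy)
  exact le_abs.2 (.inl (not_le.1 hu).le)

end Gaussian

section Taylor

variable {f f₁ f₂ f₃ : ℝ → ℝ} {M : ℝ}

lemma abs_sub_le_of_abs_deriv_le (hf : ∀ s ∈ Set.Icc (0 : ℝ) 1, HasDerivAt f (f₁ s) s)
    (hM : ∀ s ∈ Set.Icc (0 : ℝ) 1, |f₁ s| ≤ M) :
    ∀ s ∈ Set.Icc (0 : ℝ) 1, |f s - f 0| ≤ M := fun s hs => by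
  have hM0 : 0 ≤ M := (abs_nonneg _).trans (hM 0 (by simp))
  have h := (convex_Icc (0 : ℝ) 1).norm_image_sub_le_of_norm_hasDerivWithin_le
    (fun u hu => (hf u hu).hasDerivWithinAt) hM (Set.left_mem_Icc.2 zero_le_one) hs
  calc |f s - f 0| ≤ M * |s - 0| := h
    _ ≤ M := mul_le_of_le_one_right hM0 (by rw [sub_zero, abs_of_nonneg hs.1]; exact hs.2)

lemma abs_sub_taylor_one_le (hf : ∀ s ∈ Set.Icc (0 : ℝ) 1, HasDerivAt f (f₁ s) s)
    (hf₁ : ∀ s ∈ Set.Icc (0 : ℝ) 1, HasDerivAt f₁ (f₂ s) s)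
    (hM : ∀ s ∈ Set.Icc (0 : ℝ) 1, |f₂ s| ≤ M) :
    ∀ s ∈ Set.Icc (0 : ℝ) 1, |f s - f 0 - s * f₁ 0| ≤ M := fun s hs => by
  have h := abs_sub_le_of_abs_deriv_le (f := fun s => f s - s * f₁ 0)
    (fun s hs => ((hf s hs).sub ((hasDerivAt_id s).mul_const (f₁ 0))).congr_deriv (by simp))
    (abs_sub_le_of_abs_deriv_le hf₁ hM) s hs
  simpa [sub_right_comm] using h

lemma abs_sub_taylor_two_le (hf : ∀ s ∈ Set.Icc (0 : ℝ) 1, HasDerivAt f (f₁ s) s)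
    (hf₁ : ∀ s ∈ Set.Icc (0 : ℝ) 1, HasDerivAt f₁ (f₂ s) s)
    (hf₂ : ∀ s ∈ Set.Icc (0 : ℝ) 1, HasDerivAt f₂ (f₃ s) s)
    (hM : ∀ s ∈ Set.Icc (0 : ℝ) 1, |f₃ s| ≤ M) :
    |f 1 - f 0 - f₁ 0 - 1 / 2 * f₂ 0| ≤ M := by
  have h := abs_sub_le_of_abs_deriv_le (f := fun s => f s - s * f₁ 0 - s ^ 2 / 2 * f₂ 0)
    (fun s hs => (((hf s hs).sub ((hasDerivAt_id s).mul_const (f₁ 0))).sub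
      (((hasDerivAt_pow 2 s).div_const 2).mul_const (f₂ 0))).congr_deriv (by simp))
    (abs_sub_taylor_one_le hf₁ hf₂ hM) 1 (by simp)
  simp only [zero_mul, sub_zero] at h
  convert h using 2
  ring

/-- The constant in the polynomial bound `exp (-y² / 8) ≤ decayConst κ * (1 + y²) ^ (-κ)`. -/
noncomputable def decayConst (κ : ℝ) : ℝ := (8 * κ) ^ κ * exp (1 / 8)

lemma decayConst_pos {κ : ℝ} (hκ : 0 < κ) : 0 < decayConst κ := by
  unfold decayConst
  positivity

lemma exp_neg_sq_div_le {κ : ℝ} (hκ : 0 < κ) (y : ℝ) :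
    exp (-y ^ 2 / 8) ≤ decayConst κ * (1 + y ^ 2) ^ (-κ) := by
  have hlin : 1 + y ^ 2 ≤ 8 * κ * exp ((1 + y ^ 2) / (8 * κ)) := by
    rw [← div_le_iff₀' (by positivity)]
    linarith [add_one_le_exp ((1 + y ^ 2) / (8 * κ))]
  have hpow : (1 + y ^ 2) ^ κ ≤ (8 * κ) ^ κ * exp ((1 + y ^ 2) / 8) :=
    calc (1 + y ^ 2) ^ κ ≤ (8 * κ * exp ((1 + y ^ 2) / (8 * κ))) ^ κ := by gcongr
      _ = (8 * κ) ^ κ * exp ((1 + y ^ 2) / 8) := by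
        rw [mul_rpow (by positivity) (by positivity), ← exp_mul]
        congr 2
        field_simp
  rw [rpow_neg (by positivity), ← div_eq_mul_inv, le_div_iff₀ (by positivity)]
  calc exp (-y ^ 2 / 8) * (1 + y ^ 2) ^ κ
      ≤ exp (-y ^ 2 / 8) * ((8 * κ) ^ κ * exp ((1 + y ^ 2) / 8)) := by gcongr
    _ = (8 * κ) ^ κ * exp (-y ^ 2 / 8 + (1 + y ^ 2) / 8) := by rw [exp_add]; ring
    _ = decayConst κ := by unfold decayConst; ring_nf

lemma one_add_sq_sq_mul_stdNormalPDF_le (t : ℝ) :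
    (1 + t ^ 2) ^ 2 * φ t ≤ 256 * exp (-3 * t ^ 2 / 8) := by
  have hlin : 1 + t ^ 2 ≤ 16 * exp (t ^ 2 / 16) := by
    nlinarith [add_one_le_exp (t ^ 2 / 16)]
  calc (1 + t ^ 2) ^ 2 * φ t ≤ (16 * exp (t ^ 2 / 16)) ^ 2 * exp (-t ^ 2 / 2) := by
        gcongr
        · exact stdNormalPDF_nonneg t
        · exact stdNormalPDF_le_exp t
    _ = 256 * exp (2 * (t ^ 2 / 16) + -t ^ 2 / 2) := by
        rw [mul_pow, ← exp_nat_mul, exp_add]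
        norm_num [mul_assoc]
    _ = 256 * exp (-3 * t ^ 2 / 8) := by ring_nf

/-- The remainder `Φ(y + h) - Φ(y) - Φ'(y) h - Φ''(y) h² / 2`. -/
noncomputable def spaceRemainder (y h : ℝ) : ℝ :=
  Φ (y + h) - Φ y - φ y * h - 1 / 2 * (-y * φ y) * h ^ 2

/-- The remainder of the first-order expansion of `w ↦ Φ(y / √(1 + w))` at `w = 0`. By the heat
equation its linear coefficient `Φ''(y) / 2` is the quadratic one of `spaceRemainder`. -/
noncomputable def timeRemainder (y w : ℝ) : ℝ :=
  Φ (y / √(1 + w)) - Φ y - 1 / 2 * (-y * φ y) * w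

lemma hasDerivAt_add_mul (y h s : ℝ) : HasDerivAt (fun s => y + s * h) h s := by
  simpa using ((hasDerivAt_id s).mul_const h).const_add y

lemma abs_spaceRemainder_le_sq (y h : ℝ) : |spaceRemainder y h| ≤ 2 * h ^ 2 := by
  have h₁ : |Φ (y + h) - Φ y - φ y * h| ≤ h ^ 2 := by
    simpa using abs_sub_taylor_one_le (f := fun s => Φ (y + s * h)) (M := h ^ 2)
      (fun s _ => (hasDerivAt_stdNormalCDF _).comp s (hasDerivAt_add_mul y h s))
      (fun s _ => ((hasDerivAt_stdNormalPDF _).comp s (hasDerivAt_add_mul y h s)).mul_const h)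
      (fun s _ => by
        rw [mul_assoc, abs_mul, ← sq, abs_sq]
        exact mul_le_of_le_one_left (sq_nonneg h) (abs_neg_mul_stdNormalPDF_le_one _)) 1 (by simp)
  have h₂ : |1 / 2 * (-y * φ y) * h ^ 2| ≤ h ^ 2 := by
    rw [abs_mul, abs_sq, abs_mul, abs_of_pos one_half_pos]
    nlinarith [abs_neg_mul_stdNormalPDF_le_one y, sq_nonneg h]
  calc |spaceRemainder y h| ≤ _ := abs_sub _ _
    _ ≤ 2 * h ^ 2 := by linarith

lemma abs_sq_sub_one_mul_stdNormalPDF_le {κ y t : ℝ} (hκ : 0 < κ) (hty : |t - y| ≤ 1) :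
    |(t ^ 2 - 1) * φ t| ≤ 512 * decayConst κ * (1 + y ^ 2) ^ (-κ) := by
  have hpoly : |t ^ 2 - 1| ≤ (1 + t ^ 2) ^ 2 := abs_le.2 ⟨by nlinarith, by nlinarith⟩
  have hsq : y ^ 2 / 2 - 1 ≤ t ^ 2 := by
    nlinarith [abs_le.1 hty, sq_nonneg (2 * t - y)]
  have he : exp (1 / 4) ≤ 2 := by
    calc exp (1 / 4) ≤ 1 / (1 - 1 / 4) :=
          exp_bound_div_one_sub_of_interval (by norm_num) (by norm_num)
      _ ≤ 2 := by norm_num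
  calc |(t ^ 2 - 1) * φ t| ≤ (1 + t ^ 2) ^ 2 * φ t := by
        rw [abs_mul, abs_of_nonneg (stdNormalPDF_nonneg t)]
        exact mul_le_mul_of_nonneg_right hpoly (stdNormalPDF_nonneg t)
    _ ≤ 256 * exp (-3 * t ^ 2 / 8) := one_add_sq_sq_mul_stdNormalPDF_le t
    _ ≤ 256 * exp (1 / 4 + -y ^ 2 / 8) := by gcongr; nlinarith [sq_nonneg t]
    _ = 256 * (exp (1 / 4) * exp (-y ^ 2 / 8)) := by rw [exp_add]
    _ ≤ 256 * (2 * (decayConst κ * (1 + y ^ 2) ^ (-κ))) := by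
        gcongr
        exact exp_neg_sq_div_le hκ y
    _ = 512 * decayConst κ * (1 + y ^ 2) ^ (-κ) := by ring

lemma abs_spaceRemainder_le_cube {κ : ℝ} (hκ : 0 < κ) {y h : ℝ} (hh : |h| ≤ 1) :
    |spaceRemainder y h| ≤ 512 * decayConst κ * |h| ^ 3 * (1 + y ^ 2) ^ (-κ) := by
  have h₃ (s : ℝ) (hs : s ∈ Set.Icc (0 : ℝ) 1) :
      |((y + s * h) ^ 2 - 1) * φ (y + s * h) * h * h * h|
        ≤ 512 * decayConst κ * |h| ^ 3 * (1 + y ^ 2) ^ (-κ) := by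
    have hsh : |y + s * h - y| ≤ 1 := by
      rw [add_sub_cancel_left, abs_mul, abs_of_nonneg hs.1]
      exact mul_le_one₀ hs.2 (abs_nonneg h) hh
    calc _ = |((y + s * h) ^ 2 - 1) * φ (y + s * h)| * |h| ^ 3 := by
          simp only [abs_mul]; ring
      _ ≤ 512 * decayConst κ * (1 + y ^ 2) ^ (-κ) * |h| ^ 3 := by
          gcongr
          exact abs_sq_sub_one_mul_stdNormalPDF_le hκ hsh
      _ = _ := by ring
  have h₀ := abs_sub_taylor_two_le (f := fun s => Φ (y + s * h))
    (fun s _ => (hasDerivAt_stdNormalCDF _).comp s (hasDerivAt_add_mul y h s))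
    (fun s _ => ((hasDerivAt_stdNormalPDF _).comp s (hasDerivAt_add_mul y h s)).mul_const h)
    (fun s _ => (((hasDerivAt_neg_mul_stdNormalPDF _).comp s
      (hasDerivAt_add_mul y h s)).mul_const h).mul_const h) h₃
  simp only [one_mul, zero_mul, add_zero] at h₀
  convert h₀ using 2
  rw [spaceRemainder]
  ring

lemma hasDerivAt_div_sqrt {y w s : ℝ} (hs : 0 < 1 + s * w) :
    HasDerivAt (fun s => y / √(1 + s * w))
      (-(1 / 2) * (y / √(1 + s * w)) * (w / (1 + s * w))) s := by
  have h := (((hasDerivAt_add_mul 1 w s).sqrt hs.ne').inv (sqrt_pos.2 hs).ne').const_mul y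
  have := (sqrt_pos.2 hs).ne'
  simp only [div_eq_mul_inv] at h ⊢
  refine h.congr_deriv ?_
  rw [sq_sqrt hs.le]
  field_simp

lemma hasDerivAt_div_one_add_mul {w s : ℝ} (hs : 0 < 1 + s * w) :
    HasDerivAt (fun s => w / (1 + s * w)) (-(w / (1 + s * w)) ^ 2) s :=
  ((hasDerivAt_const s w).div (hasDerivAt_add_mul 1 w s) hs.ne').congr_deriv (by field_simp; ring)

lemma hasDerivAt_stdNormalCDF_div_sqrt {y w s : ℝ} (hs : 0 < 1 + s * w) :
    HasDerivAt (fun s => Φ (y / √(1 + s * w)))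
      (1 / 2 * (-(y / √(1 + s * w)) * φ (y / √(1 + s * w))) * (w / (1 + s * w))) s :=
  ((hasDerivAt_stdNormalCDF _).comp s (hasDerivAt_div_sqrt hs)).congr_deriv (by ring)

lemma hasDerivAt_half_mul_mul {g b : ℝ → ℝ} {s : ℝ}
    (hg : HasDerivAt g (-(1 / 2) * g s * b s) s) (hb : HasDerivAt b (-(b s) ^ 2) s) :
    HasDerivAt (fun s => 1 / 2 * (-g s * φ (g s)) * b s)
      (1 / 4 * g s * (3 - g s ^ 2) * (φ (g s) * b s ^ 2)) s :=
  ((((hasDerivAt_neg_mul_stdNormalPDF _).comp s hg).const_mul (1 / 2)).mul hb).congr_deriv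
    (by simp only [Function.comp_apply]; ring)

lemma abs_timeRemainder_le {y w : ℝ} (hw : 0 ≤ w) : |timeRemainder y w| ≤ 2 * w := by
  have hhalf (t : ℝ) {b : ℝ} (hb : 0 ≤ b) : |1 / 2 * (-t * φ t) * b| ≤ b := by
    rw [abs_mul, abs_of_nonneg hb, abs_mul, abs_of_pos one_half_pos]
    nlinarith [abs_neg_mul_stdNormalPDF_le_one t]
  have h₁ : |Φ (y / √(1 + w)) - Φ y| ≤ w := by
    have hpos {s : ℝ} (hs : s ∈ Set.Icc (0 : ℝ) 1) : 1 ≤ 1 + s * w := by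
      linarith [mul_nonneg hs.1 hw]
    simpa using abs_sub_le_of_abs_deriv_le (f := fun s => Φ (y / √(1 + s * w)))
      (fun s hs => hasDerivAt_stdNormalCDF_div_sqrt (one_pos.trans_le (hpos hs)))
      (fun s hs => (hhalf _ (div_nonneg hw (one_pos.trans_le (hpos hs)).le)).trans
        (div_le_self hw (hpos hs))) 1 (by simp)
  calc |timeRemainder y w| ≤ _ := abs_sub _ _
    _ ≤ 2 * w := by linarith [hhalf y hw]

lemma abs_timeRemainder_deriv_le {κ y w s : ℝ} (hκ : 0 < κ) (hw : 0 ≤ w) (hw2 : w ≤ 2)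
    (hs : s ∈ Set.Icc (0 : ℝ) 1) :
    |1 / 4 * (y / √(1 + s * w)) * (3 - (y / √(1 + s * w)) ^ 2)
        * (φ (y / √(1 + s * w)) * (w / (1 + s * w)) ^ 2)|
      ≤ 512 * decayConst κ * w ^ 2 * (1 + y ^ 2) ^ (-κ) := by
  have hsw : 0 ≤ s * w := mul_nonneg hs.1 hw
  have hb : (w / (1 + s * w)) ^ 2 ≤ w ^ 2 := by
    gcongr
    exact div_le_self hw (by linarith)
  have ht : y ^ 2 / 3 ≤ (y / √(1 + s * w)) ^ 2 := by
    rw [div_pow, sq_sqrt (by linarith)]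
    gcongr
    nlinarith [hs.2]
  set t := y / √(1 + s * w)
  have hφ := stdNormalPDF_nonneg t
  have hpoly : |1 / 4 * t * (3 - t ^ 2)| ≤ 2 * (1 + t ^ 2) ^ 2 := by
    rw [abs_le]
    constructor <;> nlinarith [sq_nonneg (t - 1), sq_nonneg (t + 1), sq_nonneg (t ^ 2 - t),
      sq_nonneg (t ^ 2 + t)]
  calc _ ≤ 2 * (1 + t ^ 2) ^ 2 * (φ t * w ^ 2) := by
        rw [abs_mul, abs_of_nonneg (mul_nonneg hφ (sq_nonneg _))]
        gcongr
    _ = 2 * ((1 + t ^ 2) ^ 2 * φ t) * w ^ 2 := by ring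
    _ ≤ 2 * (256 * exp (-3 * t ^ 2 / 8)) * w ^ 2 := by
        gcongr 2 * ?_ * w ^ 2
        exact one_add_sq_sq_mul_stdNormalPDF_le t
    _ ≤ 2 * (256 * exp (-y ^ 2 / 8)) * w ^ 2 := by gcongr; linarith
    _ ≤ 2 * (256 * (decayConst κ * (1 + y ^ 2) ^ (-κ))) * w ^ 2 := by
        gcongr
        exact exp_neg_sq_div_le hκ y
    _ = _ := by ring

lemma abs_timeRemainder_le_sq {κ : ℝ} (hκ : 0 < κ) {y w : ℝ} (hw : 0 ≤ w) (hw2 : w ≤ 2) :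
    |timeRemainder y w| ≤ 512 * decayConst κ * w ^ 2 * (1 + y ^ 2) ^ (-κ) := by
  have hpos {s : ℝ} (hs : s ∈ Set.Icc (0 : ℝ) 1) : 0 < 1 + s * w := by
    linarith [mul_nonneg hs.1 hw]
  have h := abs_sub_taylor_one_le
    (fun s hs => hasDerivAt_stdNormalCDF_div_sqrt (y := y) (hpos hs))
    (fun s hs => hasDerivAt_half_mul_mul (hasDerivAt_div_sqrt (hpos hs))
      (hasDerivAt_div_one_add_mul (hpos hs)))
    (fun s hs => abs_timeRemainder_deriv_le (y := y) hκ hw hw2 hs) 1 (by simp)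
  simpa [timeRemainder] using h

lemma abs_stdNormalCDF_mul_sub_le {y s m : ℝ} (hm : 0 < m) (hm1 : m ≤ 1) (hs : m ≤ s) :
    |Φ (y * s) - Φ y| ≤ |s - 1| / m := by
  have hpos {r : ℝ} (hr : r ∈ Set.Icc (0 : ℝ) 1) : m ≤ 1 + r * (s - 1) := by
    nlinarith [hr.1, hr.2, mul_nonneg hr.1 (sub_nonneg.2 hs)]
  have h := abs_sub_le_of_abs_deriv_le (f := fun r => Φ (y * (1 + r * (s - 1)))) (M := |s - 1| / m)
    (fun r _ => (hasDerivAt_stdNormalCDF _).comp r ((hasDerivAt_add_mul 1 (s - 1) r).const_mul y))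
    (fun r hr => by
      set t := 1 + r * (s - 1)
      have ht : 0 < t := hm.trans_le (hpos hr)
      have hid : φ (y * t) * (y * (s - 1)) = -(-(y * t) * φ (y * t)) * ((s - 1) / t) := by
        field_simp
      calc |φ (y * t) * (y * (s - 1))| = |-(y * t) * φ (y * t)| * (|s - 1| / t) := by
            rw [hid, abs_mul, abs_neg, abs_div, abs_of_pos ht]
        _ ≤ 1 * (|s - 1| / m) := by
            gcongr
            · exact abs_neg_mul_stdNormalPDF_le_one _
            · exact hpos hr
        _ = |s - 1| / m := one_mul _) 1 (by simp)
  simpa using h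

end Taylor

section OneStepPathwise

/-- The threshold separating small from large jumps when the remaining variance is `τ`. With `q`
the Hölder conjugate of `p`, it is the solution `a` of `a ^ (2 * (p - 1)) = ε ^ (2 * p) / τ`. -/
noncomputable def jumpThreshold (q ε τ : ℝ) : ℝ := ε ^ q * τ ^ (-((q - 1) / 2))

/-- The weight with which the variance of a small jump enters the one-step error at remaining
variance `τ` and distance `d` from the target level. -/
noncomputable def smallJumpKernel (q ε τ d : ℝ) : ℝ := ε ^ q * (τ + d ^ 2) ^ (-(1 + q / 2))

/-- The contribution of small jumps to the error of a step of conditional variance `v`, at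
remaining variance `τ` after the step. Steps with `v > 2 * τ` are not charged here. -/
noncomputable def smallStepCost (q ε τ d v : ℝ) : ℝ :=
  if v ≤ 2 * τ then smallJumpKernel q ε τ d * v else 0

/-- The constant of the one-step error bound. -/
noncomputable def stepConst (q : ℝ) : ℝ := 1024 * decayConst (1 + q / 2) + 2

variable {p q ε τ d x v : ℝ}

lemma two_lt_stepConst (hq : 0 < q) : 2 < stepConst q := by
  have := decayConst_pos (κ := 1 + q / 2) (by linarith)
  unfold stepConst
  linarith

lemma stepConst_pos (hq : 0 < q) : 0 < stepConst q := two_pos.trans (two_lt_stepConst hq)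

lemma jumpThreshold_pos (hε : 0 < ε) (hτ : 0 < τ) : 0 < jumpThreshold q ε τ := by
  unfold jumpThreshold
  positivity

lemma jumpThreshold_le_sqrt (hq : 1 ≤ q) (hε : 0 < ε) (hτ : ε ^ 2 ≤ τ) :
    jumpThreshold q ε τ ≤ √τ := by
  have hpow : τ ^ (-((q - 1) / 2)) ≤ ε ^ (-(q - 1)) :=
    calc τ ^ (-((q - 1) / 2)) ≤ (ε ^ 2) ^ (-((q - 1) / 2)) :=
          rpow_le_rpow_of_nonpos (by positivity) hτ (by linarith)
      _ = ε ^ (-(q - 1)) := by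
          rw [← rpow_natCast ε 2, ← rpow_mul hε.le]
          push_cast
          ring_nf
  calc jumpThreshold q ε τ ≤ ε ^ q * ε ^ (-(q - 1)) := by unfold jumpThreshold; gcongr
    _ = ε := by rw [← rpow_add hε]; simp
    _ ≤ √τ := le_sqrt_of_sq_le hτ

lemma sq_div_le_of_jumpThreshold_le (hpq : p.HolderConjugate q) (hε : 0 < ε) (hτ : 0 < τ)
    (hx : jumpThreshold q ε τ ≤ |x|) : x ^ 2 / τ ≤ ε ^ (-(2 * p)) * |x| ^ (2 * p) := by
  have ha : 0 < jumpThreshold q ε τ := jumpThreshold_pos hε hτ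
  have hconj : (p - 1) * q = p := hpq.sub_one_mul_conj
  have hthr : jumpThreshold q ε τ ^ (2 * (p - 1)) = ε ^ (2 * p) / τ := by
    unfold jumpThreshold
    rw [mul_rpow (by positivity) (by positivity), ← rpow_mul hε.le, ← rpow_mul hτ.le,
      show q * (2 * (p - 1)) = 2 * p by linear_combination 2 * hconj,
      show -((q - 1) / 2) * (2 * (p - 1)) = -1 by linear_combination -hconj, rpow_neg_one]
    rfl
  have hle : ε ^ (2 * p) / τ ≤ |x| ^ (2 * (p - 1)) := by
    rw [← hthr]
    exact rpow_le_rpow ha.le hx (by linarith [hpq.lt])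
  have hsplit : |x| ^ (2 * p) = |x| ^ (2 * (p - 1)) * x ^ 2 := by
    rw [← sq_abs x, ← rpow_natCast, ← rpow_add (ha.trans_le hx)]
    push_cast
    ring_nf
  rw [rpow_neg hε.le, hsplit, ← mul_assoc, div_eq_inv_mul]
  gcongr
  rw [le_inv_mul_iff₀ (by positivity)]
  exact hle

lemma smallJumpKernel_nonneg (hε : 0 ≤ ε) (hτ : 0 ≤ τ) : 0 ≤ smallJumpKernel q ε τ d := by
  unfold smallJumpKernel
  positivity

lemma jumpThreshold_div_mul_eq_smallJumpKernel (hτ : 0 < τ) :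
    jumpThreshold q ε τ / √τ ^ 3 * (1 + (d / √τ) ^ 2) ^ (-(1 + q / 2))
      = smallJumpKernel q ε τ d := by
  have hfactor : τ + d ^ 2 = τ * (1 + (d / √τ) ^ 2) := by
    rw [div_pow, sq_sqrt hτ.le]
    field_simp
  have hexp : τ ^ (-((q - 1) / 2)) / √τ ^ 3 = τ ^ (-(1 + q / 2)) := by
    rw [sqrt_eq_rpow, ← rpow_natCast, ← rpow_mul hτ.le, ← rpow_sub hτ]
    push_cast
    ring_nf
  unfold jumpThreshold smallJumpKernel
  rw [hfactor, mul_rpow hτ.le (by positivity), ← hexp]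
  ring

lemma smallJumpKernel_le (hq : 1 ≤ q) (hε : 0 < ε) (hτ : ε ^ 2 ≤ τ) :
    smallJumpKernel q ε τ d ≤ 1 / τ := by
  have hτ0 : 0 < τ := (pow_pos hε 2).trans_le hτ
  have : 0 < √τ := sqrt_pos.2 hτ0
  have hdecay : (1 + (d / √τ) ^ 2) ^ (-(1 + q / 2)) ≤ 1 :=
    rpow_le_one_of_one_le_of_nonpos (by nlinarith [sq_nonneg (d / √τ)]) (by linarith)
  rw [← jumpThreshold_div_mul_eq_smallJumpKernel hτ0]
  calc _ ≤ √τ / √τ ^ 3 * 1 := by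
        gcongr
        · exact jumpThreshold_le_sqrt hq hε hτ
    _ = 1 / √τ ^ 2 := by field_simp
    _ = 1 / τ := by rw [sq_sqrt hτ0.le]

lemma abs_spaceRemainder_div_sqrt_le (hpq : p.HolderConjugate q) (hε : 0 < ε) (hτ : ε ^ 2 ≤ τ) :
    |spaceRemainder (d / √τ) (-x / √τ)| ≤ stepConst q * (ε ^ (-(2 * p)) * |x| ^ (2 * p)
      + if |x| ≤ jumpThreshold q ε τ then smallJumpKernel q ε τ d * x ^ 2 else 0) := by
  have hτ0 : 0 < τ := (pow_pos hε 2).trans_le hτ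
  have hs : 0 < √τ := sqrt_pos.2 hτ0
  have hq : 0 < 1 + q / 2 := by linarith [hpq.symm.pos]
  have hC := decayConst_pos hq
  have hJ : 0 ≤ ε ^ (-(2 * p)) * |x| ^ (2 * p) := by positivity
  have hK : 0 ≤ smallJumpKernel q ε τ d := smallJumpKernel_nonneg hε.le hτ0.le
  split_ifs with hx
  · have ha : jumpThreshold q ε τ ≤ √τ := jumpThreshold_le_sqrt hpq.symm.lt.le hε hτ
    have hdiv : |-x / √τ| = |x| / √τ := by rw [abs_div, abs_neg, abs_of_pos hs]
    have hcube : |-x / √τ| ^ 3 ≤ jumpThreshold q ε τ / √τ ^ 3 * x ^ 2 := by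
      rw [hdiv, div_pow, ← sq_abs x, div_mul_eq_mul_div, pow_succ' |x|]
      gcongr
    calc _ ≤ 512 * decayConst (1 + q / 2) * |-x / √τ| ^ 3
            * (1 + (d / √τ) ^ 2) ^ (-(1 + q / 2)) :=
          abs_spaceRemainder_le_cube hq (by rw [hdiv, div_le_one hs]; linarith)
      _ ≤ 512 * decayConst (1 + q / 2) * (jumpThreshold q ε τ / √τ ^ 3 * x ^ 2)
            * (1 + (d / √τ) ^ 2) ^ (-(1 + q / 2)) := by gcongr
      _ = 512 * decayConst (1 + q / 2) * (smallJumpKernel q ε τ d * x ^ 2) := by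
          rw [← jumpThreshold_div_mul_eq_smallJumpKernel hτ0]; ring
      _ ≤ stepConst q * (ε ^ (-(2 * p)) * |x| ^ (2 * p) + smallJumpKernel q ε τ d * x ^ 2) := by
          unfold stepConst
          gcongr
          · linarith
          · linarith
  · calc _ ≤ 2 * (-x / √τ) ^ 2 := abs_spaceRemainder_le_sq _ _
      _ = 2 * (x ^ 2 / τ) := by rw [div_pow, sq_sqrt hτ0.le, neg_sq]
      _ ≤ stepConst q * (ε ^ (-(2 * p)) * |x| ^ (2 * p) + 0) := by
          rw [add_zero]
          exact mul_le_mul (two_lt_stepConst hpq.symm.pos).le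
            (sq_div_le_of_jumpThreshold_le hpq hε hτ0 (not_le.1 hx).le) (by positivity)
            (stepConst_pos hpq.symm.pos).le

lemma abs_timeRemainder_div_le (hq : 1 ≤ q) (hε : 0 < ε) (hτ : ε ^ 2 ≤ τ) (hv : 0 ≤ v) :
    |timeRemainder (d / √τ) (v / τ)| ≤ stepConst q *
      if v ≤ 2 * jumpThreshold q ε τ ^ 2 then smallJumpKernel q ε τ d * v else v / τ := by
  have hτ0 : 0 < τ := (pow_pos hε 2).trans_le hτ
  have : 0 < √τ := sqrt_pos.2 hτ0
  have hκ : 0 < 1 + q / 2 := by linarith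
  have hC := decayConst_pos hκ
  have ha0 : 0 < jumpThreshold q ε τ := jumpThreshold_pos hε hτ0
  have ha : jumpThreshold q ε τ ≤ √τ := jumpThreshold_le_sqrt hq hε hτ
  have hw : 0 ≤ v / τ := div_nonneg hv hτ0.le
  split_ifs with hsmall
  · have hw2 : v / τ ≤ 2 := by
      rw [div_le_iff₀ hτ0]
      calc v ≤ 2 * √τ ^ 2 := hsmall.trans (by gcongr)
        _ = 2 * τ := by rw [sq_sqrt hτ0.le]
    have hsq : (v / τ) ^ 2 ≤ 2 * (jumpThreshold q ε τ / √τ ^ 3 * v) :=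
      calc (v / τ) ^ 2 = v * v / √τ ^ 4 := by
            rw [div_pow, show √τ ^ 4 = (√τ ^ 2) ^ 2 by ring, sq_sqrt hτ0.le, sq v]
        _ ≤ 2 * (jumpThreshold q ε τ * √τ) * v / √τ ^ 4 := by
            gcongr
            calc v ≤ 2 * (jumpThreshold q ε τ * jumpThreshold q ε τ) := by rwa [← sq]
              _ ≤ 2 * (jumpThreshold q ε τ * √τ) := by gcongr
        _ = 2 * (jumpThreshold q ε τ / √τ ^ 3 * v) := by field_simp
    calc _ ≤ 512 * decayConst (1 + q / 2) * (v / τ) ^ 2 * (1 + (d / √τ) ^ 2) ^ (-(1 + q / 2)) :=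
          abs_timeRemainder_le_sq hκ hw hw2
      _ ≤ 512 * decayConst (1 + q / 2) * (2 * (jumpThreshold q ε τ / √τ ^ 3 * v))
            * (1 + (d / √τ) ^ 2) ^ (-(1 + q / 2)) := by gcongr
      _ = 1024 * decayConst (1 + q / 2) * (smallJumpKernel q ε τ d * v) := by
          rw [← jumpThreshold_div_mul_eq_smallJumpKernel hτ0]; ring
      _ ≤ stepConst q * (smallJumpKernel q ε τ d * v) := by
          have := smallJumpKernel_nonneg (q := q) (d := d) hε.le hτ0.le
          unfold stepConst
          gcongr
          linarith
  · exact (abs_timeRemainder_le hw).trans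
      (mul_le_mul_of_nonneg_right (two_lt_stepConst (by linarith)).le hw)

/-- The multiplier of the centred variable `x² - v` in the one-step error. For large conditional
variance it is negative, which lets `x² / τ` pay for the error `v / τ` of the time step. -/
noncomputable def stepMultiplier (q ε τ d v : ℝ) : ℝ :=
  if v ≤ 2 * jumpThreshold q ε τ ^ 2 then smallJumpKernel q ε τ d else -3 / τ

lemma abs_stepMultiplier_le (hq : 1 ≤ q) (hε : 0 < ε) (hτ : ε ^ 2 ≤ τ) :
    |stepMultiplier q ε τ d v| ≤ 3 / ε ^ 2 := by
  have hτ0 : 0 < τ := (pow_pos hε 2).trans_le hτ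
  have hle : 3 / τ ≤ 3 / ε ^ 2 := by gcongr
  unfold stepMultiplier
  split_ifs
  · rw [abs_of_nonneg (smallJumpKernel_nonneg hε.le hτ0.le)]
    calc _ ≤ 1 / τ := smallJumpKernel_le hq hε hτ
      _ ≤ 3 / τ := by gcongr; norm_num
      _ ≤ _ := hle
  · rwa [abs_div, abs_neg, abs_of_pos hτ0, abs_of_pos three_pos]

lemma jump_error_add_variance_error_le (hpq : p.HolderConjugate q) (hε : 0 < ε) (hτ : ε ^ 2 ≤ τ) :
    (ε ^ (-(2 * p)) * |x| ^ (2 * p)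
        + if |x| ≤ jumpThreshold q ε τ then smallJumpKernel q ε τ d * x ^ 2 else 0)
      + (if v ≤ 2 * jumpThreshold q ε τ ^ 2 then smallJumpKernel q ε τ d * v else v / τ)
      ≤ 4 * (ε ^ (-(2 * p)) * |x| ^ (2 * p))
        + 2 * smallStepCost q ε τ d v
        + stepMultiplier q ε τ d v * (x ^ 2 - v) := by
  have hτ0 : 0 < τ := (pow_pos hε 2).trans_le hτ
  have ha0 : 0 < jumpThreshold q ε τ := jumpThreshold_pos hε hτ0
  have ha : jumpThreshold q ε τ ^ 2 ≤ τ := by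
    rw [← le_sqrt ha0.le hτ0.le]
    exact jumpThreshold_le_sqrt hpq.symm.lt.le hε hτ
  have hJ : 0 ≤ ε ^ (-(2 * p)) * |x| ^ (2 * p) := by positivity
  have hK : 0 ≤ smallJumpKernel q ε τ d := smallJumpKernel_nonneg hε.le hτ0.le
  have hK1 : smallJumpKernel q ε τ d ≤ 1 / τ := smallJumpKernel_le hpq.symm.lt.le hε hτ
  have hbig := sq_div_le_of_jumpThreshold_le (x := x) hpq hε hτ0
  have hmul (y : ℝ) : -3 / τ * (y - v) = 3 * (v / τ) - 3 * (y / τ) := by ring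
  unfold stepMultiplier smallStepCost
  set a := jumpThreshold q ε τ
  set K := smallJumpKernel q ε τ d
  set J := ε ^ (-(2 * p)) * |x| ^ (2 * p)
  by_cases hv : v ≤ 2 * a ^ 2
  · have hjump : (if |x| ≤ a then K * x ^ 2 else 0) ≤ K * x ^ 2 := by
      split_ifs
      exacts [le_rfl, by positivity]
    rw [if_pos hv, if_pos hv, if_pos (hv.trans (by gcongr : _ ≤ 2 * τ))]
    linarith
  · have hav : a ^ 2 / τ ≤ v / τ / 2 := by
      rw [div_right_comm]
      gcongr
      linarith
    have hsq : x ^ 2 / τ ≤ J + v / τ / 2 := by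
      rcases le_total a |x| with hx | hx
      · linarith [hbig hx, (by positivity : 0 ≤ a ^ 2 / τ)]
      · have : x ^ 2 / τ ≤ a ^ 2 / τ := by
          rw [← sq_abs x]
          gcongr
        linarith
    have hjump : (if |x| ≤ a then K * x ^ 2 else 0) ≤ v / τ / 2 := by
      refine le_trans ?_ hav
      split_ifs with hx
      · calc K * x ^ 2 ≤ 1 / τ * a ^ 2 := by rw [← sq_abs x]; gcongr
          _ = a ^ 2 / τ := by ring
      · positivity
    have hlast : 0 ≤ if v ≤ 2 * τ then K * v else 0 := by
      have : 0 ≤ v := by linarith [sq_nonneg a, not_le.1 hv]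
      positivity
    rw [if_neg hv, if_neg hv, hmul]
    linarith

lemma abs_step_sub_martingale_le (hpq : p.HolderConjugate q) (hε : 0 < ε) (hτ : ε ^ 2 ≤ τ)
    (hv : 0 ≤ v) :
    |Φ ((d - x) / √τ) - Φ (d / √(τ + v)) - (-φ (d / √τ) / √τ) * x
        - 1 / 2 * (-(d / √τ) * φ (d / √τ)) / τ * (x ^ 2 - v)|
      ≤ stepConst q * (4 * (ε ^ (-(2 * p)) * |x| ^ (2 * p))
        + 2 * smallStepCost q ε τ d v
        + stepMultiplier q ε τ d v * (x ^ 2 - v)) := by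
  have hτ0 : 0 < τ := (pow_pos hε 2).trans_le hτ
  have hscale : d / √(τ + v) = d / √τ / √(1 + v / τ) := by
    rw [div_div, ← sqrt_mul hτ0.le, mul_add, mul_div_cancel₀ _ hτ0.ne', mul_one]
  have hdecomp : Φ ((d - x) / √τ) - Φ (d / √(τ + v)) - (-φ (d / √τ) / √τ) * x
        - 1 / 2 * (-(d / √τ) * φ (d / √τ)) / τ * (x ^ 2 - v)
      = spaceRemainder (d / √τ) (-x / √τ) - timeRemainder (d / √τ) (v / τ) := by
    rw [spaceRemainder, timeRemainder, ← hscale, ← add_div, ← sub_eq_add_neg, div_pow,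
      sq_sqrt hτ0.le]
    ring
  rw [hdecomp]
  calc _ ≤ |spaceRemainder (d / √τ) (-x / √τ)| + |timeRemainder (d / √τ) (v / τ)| := abs_sub _ _
    _ ≤ stepConst q * (ε ^ (-(2 * p)) * |x| ^ (2 * p)
          + if |x| ≤ jumpThreshold q ε τ then smallJumpKernel q ε τ d * x ^ 2 else 0)
        + stepConst q * (if v ≤ 2 * jumpThreshold q ε τ ^ 2 then smallJumpKernel q ε τ d * v
          else v / τ) :=
        add_le_add (abs_spaceRemainder_div_sqrt_le hpq hε hτ)
          (abs_timeRemainder_div_le hpq.symm.lt.le hε hτ hv)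
    _ ≤ _ := by
        rw [← mul_add]
        exact mul_le_mul_of_nonneg_left (jump_error_add_variance_error_le hpq hε hτ)
          (stepConst_pos hpq.symm.pos).le

end OneStepPathwise

section SmallStepCost

variable {q ε τ d x v a : ℝ}

lemma smallStepCost_nonneg (hε : 0 ≤ ε) (hτ : 0 ≤ τ) (hv : 0 ≤ v) :
    0 ≤ smallStepCost q ε τ d v := by
  have := smallJumpKernel_nonneg (q := q) (d := d) hε hτ
  unfold smallStepCost
  positivity

lemma smallStepCost_le_two (hq : 1 ≤ q) (hε : 0 < ε) (hτ : ε ^ 2 ≤ τ) (hv : 0 ≤ v) :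
    smallStepCost q ε τ d v ≤ 2 := by
  have hτ0 : 0 < τ := (pow_pos hε 2).trans_le hτ
  unfold smallStepCost
  split_ifs with h
  · calc smallJumpKernel q ε τ d * v ≤ 1 / τ * (2 * τ) :=
          mul_le_mul (smallJumpKernel_le hq hε hτ) h hv (by positivity)
      _ = 2 := by field_simp
  · exact zero_le_two

lemma smallStepCost_div_mul_add_le (hε : 0 ≤ ε) (hτ : 0 < τ) (hv : 0 ≤ v) :
    smallStepCost q ε τ d v / (6 * τ) * (τ + v) ≤ 1 / 2 * smallStepCost q ε τ d v := by
  have hcost := smallStepCost_nonneg (q := q) (d := d) hε hτ.le hv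
  by_cases h : v ≤ 2 * τ
  · calc smallStepCost q ε τ d v / (6 * τ) * (τ + v)
        ≤ smallStepCost q ε τ d v / (6 * τ) * (3 * τ) := by gcongr; linarith
      _ = 1 / 2 * smallStepCost q ε τ d v := by field_simp; ring
  · simp [smallStepCost, h]

lemma smallStepCost_le_of_sq_le (hq : 0 < q) (hε : 0 ≤ ε) (hτ : 0 < τ) (hv : 0 ≤ v)
    (hx : x ^ 2 ≤ 6 * τ) :
    smallStepCost q ε τ d v ≤ 13 ^ (1 + q / 2) * smallStepCost q ε τ (d - x) v := by
  have hbase : τ + (d - x) ^ 2 ≤ 13 * (τ + d ^ 2) := by nlinarith [sq_nonneg (d + x), sq_nonneg d]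
  have hrpow : (τ + d ^ 2) ^ (-(1 + q / 2))
      ≤ 13 ^ (1 + q / 2) * (τ + (d - x) ^ 2) ^ (-(1 + q / 2)) := by
    have := rpow_le_rpow_of_nonpos (by positivity) hbase
      (by linarith : -(1 + q / 2) ≤ 0)
    rwa [mul_rpow (by norm_num) (by positivity), rpow_neg (by norm_num),
      inv_mul_le_iff₀ (by positivity)] at this
  unfold smallStepCost smallJumpKernel
  split_ifs
  · calc ε ^ q * (τ + d ^ 2) ^ (-(1 + q / 2)) * v
        ≤ ε ^ q * (13 ^ (1 + q / 2) * (τ + (d - x) ^ 2) ^ (-(1 + q / 2))) * v := by gcongr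
      _ = _ := by ring
  · simp

lemma smallStepCost_le_add (hq : 0 < q) (hε : 0 ≤ ε) (hτ : 0 < τ) (hv : 0 ≤ v) :
    smallStepCost q ε τ d v ≤ smallStepCost q ε τ d v / (6 * τ) * x ^ 2
      + 13 ^ (1 + q / 2) * smallStepCost q ε τ (d - x) v := by
  have hcost (d : ℝ) := smallStepCost_nonneg (q := q) (d := d) hε hτ.le hv
  rcases le_total (x ^ 2) (6 * τ) with hx | hx
  · exact (smallStepCost_le_of_sq_le hq hε hτ hv hx).trans
      (le_add_of_nonneg_left (by have := hcost d; positivity))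
  · refine le_add_of_le_of_nonneg ?_ (by have := hcost (d - x); positivity)
    rw [div_mul_eq_mul_div, le_div_iff₀ (by positivity)]
    exact mul_le_mul_of_nonneg_left hx (hcost d)

lemma mul_rpow_neg_le_rpow_neg_sub {α s v : ℝ} (hα : 0 < α) (hs : 0 < s) (hv : 0 ≤ v) :
    α * (s + v) ^ (-(1 + α)) * v ≤ s ^ (-α) - (s + v) ^ (-α) := by
  have hsv : 0 < s + v := by linarith
  have hratio : 0 < s / (s + v) := by positivity
  have hbernoulli : 1 + α * (v / (s + v)) ≤ (s / (s + v)) ^ (-α) :=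
    calc 1 + α * (v / (s + v)) = 1 - α * (s / (s + v) - 1) := by field_simp; ring
      _ ≤ log (s / (s + v)) * -α + 1 := by nlinarith [log_le_sub_one_of_pos hratio]
      _ ≤ exp (log (s / (s + v)) * -α) := add_one_le_exp _
      _ = (s / (s + v)) ^ (-α) := (rpow_def_of_pos hratio _).symm
  rw [div_rpow hs.le hsv.le, le_div_iff₀ (by positivity)] at hbernoulli
  calc α * (s + v) ^ (-(1 + α)) * v
    _ = (1 + α * (v / (s + v))) * (s + v) ^ (-α) - (s + v) ^ (-α) := by
        rw [neg_add', neg_sub_left, neg_add', rpow_sub_one hsv.ne']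
        field_simp
        ring
    _ ≤ _ := by linarith

lemma smallStepCost_le_rpow_sub_rpow (hq : 0 < q) (hε : 0 ≤ ε) (hτ : 0 < τ) (hv : 0 ≤ v) :
    smallStepCost q ε τ d v ≤ ε ^ q * (3 ^ (1 + q / 2) / (q / 2))
      * ((τ + d ^ 2) ^ (-(q / 2)) - (τ + v + d ^ 2) ^ (-(q / 2))) := by
  have hs : 0 < τ + d ^ 2 := by positivity
  have hdiff := mul_rpow_neg_le_rpow_neg_sub (half_pos hq) hs hv
  rw [add_right_comm τ v]
  unfold smallStepCost smallJumpKernel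
  split_ifs with h
  · have hthree : (τ + d ^ 2) ^ (-(1 + q / 2))
        ≤ 3 ^ (1 + q / 2) * (τ + d ^ 2 + v) ^ (-(1 + q / 2)) := by
      have := rpow_le_rpow_of_nonpos (by positivity)
        (by nlinarith [sq_nonneg d] : τ + d ^ 2 + v ≤ 3 * (τ + d ^ 2))
        (by linarith : -(1 + q / 2) ≤ 0)
      rwa [mul_rpow (by norm_num) hs.le, rpow_neg (by norm_num),
        inv_mul_le_iff₀ (by positivity)] at this
    calc ε ^ q * (τ + d ^ 2) ^ (-(1 + q / 2)) * v
        ≤ ε ^ q * (3 ^ (1 + q / 2) * (τ + d ^ 2 + v) ^ (-(1 + q / 2))) * v := by gcongr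
      _ = ε ^ q * (3 ^ (1 + q / 2) / (q / 2))
            * (q / 2 * (τ + d ^ 2 + v) ^ (-(1 + q / 2)) * v) := by field_simp
      _ ≤ _ := by gcongr
  · have : 0 ≤ (τ + d ^ 2) ^ (-(q / 2)) - (τ + d ^ 2 + v) ^ (-(q / 2)) :=
      le_trans (by positivity) hdiff
    positivity

lemma add_sq_rpow_neg_half_le_max_rpow_neg (ha : 0 < a) (hq : 0 ≤ q) (hτ : a ^ 2 ≤ τ) :
    (τ + d ^ 2) ^ (-(q / 2)) ≤ max a |d| ^ (-q) := by
  have hmax : 0 < max a |d| := lt_max_of_lt_left ha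
  have hbase : max a |d| ^ 2 ≤ τ + d ^ 2 := by
    rcases max_choice a |d| with h | h <;> rw [h]
    · linarith [sq_nonneg d]
    · rw [sq_abs]
      linarith [sq_nonneg a]
  calc (τ + d ^ 2) ^ (-(q / 2)) ≤ (max a |d| ^ 2) ^ (-(q / 2)) :=
        rpow_le_rpow_of_nonpos (by positivity) hbase (by linarith)
    _ = max a |d| ^ (-q) := by
        rw [← rpow_natCast, ← rpow_mul hmax.le]
        push_cast
        ring_nf

lemma sum_smallStepCost_le (hq : 0 < q) (hε : 0 ≤ ε) (ha : 0 < a) {n : ℕ} {τ v : ℕ → ℝ}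
    (hτ : ∀ i ≤ n, a ^ 2 ≤ τ i) (hv : ∀ i, 0 ≤ v i) (hstep : ∀ i, τ (i + 1) + v i = τ i) :
    ∑ i ∈ range n, smallStepCost q ε (τ (i + 1)) d (v i)
      ≤ ε ^ q * (3 ^ (1 + q / 2) / (q / 2)) * max a |d| ^ (-q) := by
  have hτ0 (i : ℕ) (hi : i ≤ n) : 0 < τ i := (pow_pos ha 2).trans_le (hτ i hi)
  calc _ ≤ ∑ i ∈ range n, ε ^ q * (3 ^ (1 + q / 2) / (q / 2))
          * ((τ (i + 1) + d ^ 2) ^ (-(q / 2)) - (τ i + d ^ 2) ^ (-(q / 2))) := by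
        refine sum_le_sum fun i hi => ?_
        rw [← hstep i]
        exact smallStepCost_le_rpow_sub_rpow hq hε (hτ0 _ (mem_range.1 hi)) (hv i)
    _ = ε ^ q * (3 ^ (1 + q / 2) / (q / 2))
          * ((τ n + d ^ 2) ^ (-(q / 2)) - (τ 0 + d ^ 2) ^ (-(q / 2))) := by
        rw [← mul_sum, sum_range_sub fun i => (τ i + d ^ 2) ^ (-(q / 2))]
    _ ≤ _ := by
        gcongr
        have := hτ0 0 n.zero_le
        have : 0 ≤ (τ 0 + d ^ 2) ^ (-(q / 2)) := by positivity
        linarith [add_sq_rpow_neg_half_le_max_rpow_neg (d := d) ha hq.le (hτ n le_rfl)]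

end SmallStepCost

section CondExp

variable {Ω : Type*} {m mΩ : MeasurableSpace Ω} {μ : Measure Ω} {Z f g : Ω → ℝ}

lemma measurable_smallJumpKernel {q ε : ℝ} {τ d : Ω → ℝ} (hτ : Measurable[m] τ)
    (hd : Measurable[m] d) : Measurable[m] fun ω => smallJumpKernel q ε (τ ω) (d ω) :=
  ((hτ.add (hd.pow_const 2)).pow_const _).const_mul _

lemma measurable_smallStepCost {q ε : ℝ} {τ d v : Ω → ℝ} (hτ : Measurable[m] τ)
    (hd : Measurable[m] d) (hv : Measurable[m] v) :
    Measurable[m] fun ω => smallStepCost q ε (τ ω) (d ω) (v ω) :=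
  Measurable.ite (measurableSet_le hv (hτ.const_mul 2))
    ((measurable_smallJumpKernel hτ hd).mul hv) measurable_const

lemma measurable_stepMultiplier {q ε : ℝ} {τ d v : Ω → ℝ} (hτ : Measurable[m] τ)
    (hd : Measurable[m] d) (hv : Measurable[m] v) :
    Measurable[m] fun ω => stepMultiplier q ε (τ ω) (d ω) (v ω) :=
  Measurable.ite
    (measurableSet_le hv ((((hτ.pow_const _).const_mul _).pow_const 2).const_mul 2))
    (measurable_smallJumpKernel hτ hd) (measurable_const.div hτ)

lemma integrable_of_abs_le [IsFiniteMeasure μ] {C : ℝ} (hf : Measurable f) (hC : ∀ ω, |f ω| ≤ C) :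
    Integrable f μ :=
  .of_bound hf.aestronglyMeasurable C (ae_of_all _ hC)

lemma integrable_mul_of_abs_le {C : ℝ} (hZ : Measurable Z) (hC : ∀ ω, |Z ω| ≤ C)
    (hf : Integrable f μ) : Integrable (fun ω => Z ω * f ω) μ :=
  hf.bdd_mul hZ.aestronglyMeasurable (ae_of_all _ hC)

lemma integral_mul_eq_of_condExp_eq [IsFiniteMeasure μ] (hm : m ≤ mΩ) (hZ : Measurable[m] Z)
    (hf : Integrable f μ) (hZf : Integrable (fun ω => Z ω * f ω) μ) (hfg : μ[f | m] =ᵐ[μ] g) :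
    ∫ ω, Z ω * f ω ∂μ = ∫ ω, Z ω * g ω ∂μ :=
  calc ∫ ω, Z ω * f ω ∂μ = ∫ ω, (μ[Z * f | m]) ω ∂μ := (integral_condExp hm).symm
    _ = ∫ ω, Z ω * g ω ∂μ := integral_congr_ae <|
        (condExp_mul_of_stronglyMeasurable_left hZ.stronglyMeasurable hZf hf).trans
          (EventuallyEq.rfl.mul hfg)

end CondExp

/-- The sequence `Y` consists of square integrable martingale differences, with conditional
variances `v`: the difference `Y i` is `ℱ (i + 1)`-measurable and `v i` is `ℱ i`-measurable. -/
structure IsMartingaleDifference {Ω : Type*} {mΩ : MeasurableSpace Ω} (μ : Measure Ω)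
    (ℱ : Filtration ℕ mΩ) (Y v : ℕ → Ω → ℝ) : Prop where
  measurable_diff' : ∀ i, Measurable[ℱ (i + 1)] (Y i)
  memLp_two : ∀ i, MemLp (Y i) 2 μ
  condExp_diff : ∀ i, μ[Y i | ℱ i] =ᵐ[μ] 0
  measurable_var' : ∀ i, Measurable[ℱ i] (v i)
  var_nonneg : ∀ i ω, 0 ≤ v i ω
  condExp_sq : ∀ i, μ[fun ω => Y i ω ^ 2 | ℱ i] =ᵐ[μ] v i

/-- The sum of the first `k` terms of a sequence of functions. -/
def partialSum {Ω : Type*} (Y : ℕ → Ω → ℝ) (k : ℕ) (ω : Ω) : ℝ := ∑ i ∈ range k, Y i ω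

lemma partialSum_succ {Ω : Type*} (Y : ℕ → Ω → ℝ) (k : ℕ) (ω : Ω) :
    partialSum Y (k + 1) ω = partialSum Y k ω + Y k ω := sum_range_succ _ _

lemma measurable_partialSum_of_forall_lt {Ω : Type*} {m : MeasurableSpace Ω} {Y : ℕ → Ω → ℝ} {k : ℕ}
    (hY : ∀ i < k, Measurable (Y i)) : Measurable (partialSum Y k) := by
  unfold partialSum
  exact measurable_fun_sum _ fun i hi => hY i (mem_range.1 hi)

namespace IsMartingaleDifference

variable {Ω : Type*} {mΩ : MeasurableSpace Ω} {μ : Measure Ω} {ℱ : Filtration ℕ mΩ}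
  {Y v : ℕ → Ω → ℝ}

lemma measurable_diff (h : IsMartingaleDifference μ ℱ Y v) (i : ℕ) : Measurable (Y i) :=
  (h.measurable_diff' i).mono (ℱ.le _) le_rfl

lemma measurable_var (h : IsMartingaleDifference μ ℱ Y v) (i : ℕ) : Measurable (v i) :=
  (h.measurable_var' i).mono (ℱ.le _) le_rfl

lemma integrable_sq (h : IsMartingaleDifference μ ℱ Y v) (i : ℕ) :
    Integrable (fun ω => Y i ω ^ 2) μ := (h.memLp_two i).integrable_sq

lemma integrable_var (h : IsMartingaleDifference μ ℱ Y v) (i : ℕ) : Integrable (v i) μ :=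
  integrable_condExp.congr (h.condExp_sq i)

lemma measurable_partialSum' (h : IsMartingaleDifference μ ℱ Y v) (k : ℕ) :
    Measurable[ℱ k] (partialSum Y k) :=
  measurable_partialSum_of_forall_lt fun i hi => (h.measurable_diff' i).mono (ℱ.mono hi) le_rfl

lemma measurable_partialSum (h : IsMartingaleDifference μ ℱ Y v) (k : ℕ) :
    Measurable (partialSum Y k) := (h.measurable_partialSum' k).mono (ℱ.le _) le_rfl

lemma measurable_partialSum_var (h : IsMartingaleDifference μ ℱ Y v) (k : ℕ) :
    Measurable (partialSum v k) := measurable_partialSum_of_forall_lt fun i _ => h.measurable_var i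

lemma measurable_partialSum_var' (h : IsMartingaleDifference μ ℱ Y v) (k : ℕ) :
    Measurable[ℱ k] (partialSum v (k + 1)) :=
  measurable_partialSum_of_forall_lt fun i hi =>
    (h.measurable_var' i).mono (ℱ.mono (Nat.le_of_lt_succ hi)) le_rfl

lemma monotone_partialSum_var (h : IsMartingaleDifference μ ℱ Y v) (ω : Ω) :
    Monotone (partialSum v · ω) := fun _ _ hkl =>
  sum_le_sum_of_subset_of_nonneg (range_mono hkl) fun i _ _ => h.var_nonneg i ω

lemma integrable_partialSum_var (h : IsMartingaleDifference μ ℱ Y v) (k : ℕ) :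
    Integrable (partialSum v k) μ := by
  unfold partialSum
  exact integrable_finsetSum _ fun i _ => h.integrable_var i

lemma memLp_two_partialSum (h : IsMartingaleDifference μ ℱ Y v) (k : ℕ) :
    MemLp (partialSum Y k) 2 μ := by
  unfold partialSum
  exact memLp_finsetSum _ fun i _ => h.memLp_two i

variable [IsFiniteMeasure μ]

lemma integral_mul_diff_eq_zero (h : IsMartingaleDifference μ ℱ Y v) {i : ℕ} {Z : Ω → ℝ}
    (hZ : Measurable[ℱ i] Z) (hZY : Integrable (fun ω => Z ω * Y i ω) μ) :
    ∫ ω, Z ω * Y i ω ∂μ = 0 := by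
  simpa using integral_mul_eq_of_condExp_eq (ℱ.le i) hZ ((h.memLp_two i).integrable one_le_two) hZY
    (h.condExp_diff i)

lemma integral_mul_diff_sq (h : IsMartingaleDifference μ ℱ Y v) {i : ℕ} {Z : Ω → ℝ} {C : ℝ}
    (hZ : Measurable[ℱ i] Z) (hC : ∀ ω, |Z ω| ≤ C) :
    ∫ ω, Z ω * Y i ω ^ 2 ∂μ = ∫ ω, Z ω * v i ω ∂μ :=
  integral_mul_eq_of_condExp_eq (ℱ.le i) hZ (h.integrable_sq i)
    (integrable_mul_of_abs_le (hZ.mono (ℱ.le i) le_rfl) hC (h.integrable_sq i)) (h.condExp_sq i)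

lemma integral_mul_sq_sub_partialSum (h : IsMartingaleDifference μ ℱ Y v) {i j : ℕ} (hij : i ≤ j)
    {Z : Ω → ℝ} {C : ℝ} (hZ : Measurable[ℱ i] Z) (hC : ∀ ω, |Z ω| ≤ C) :
    ∫ ω, Z ω * (partialSum Y j ω - partialSum Y i ω) ^ 2 ∂μ
      = ∫ ω, Z ω * (partialSum v j ω - partialSum v i ω) ∂μ := by
  have hZM : Measurable Z := hZ.mono (ℱ.le i) le_rfl
  induction j, hij using Nat.le_induction with
  | base => simp
  | succ j hij ih =>
    set D : Ω → ℝ := fun ω => partialSum Y j ω - partialSum Y i ω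
    have hZj : Measurable[ℱ j] Z := hZ.mono (ℱ.mono hij) le_rfl
    have hDm : Measurable[ℱ j] D :=
      (h.measurable_partialSum' j).sub ((h.measurable_partialSum' i).mono (ℱ.mono hij) le_rfl)
    have hD : MemLp D 2 μ := (h.memLp_two_partialSum j).sub (h.memLp_two_partialSum i)
    have iDsq : Integrable (fun ω => Z ω * D ω ^ 2) μ :=
      integrable_mul_of_abs_le hZM hC hD.integrable_sq
    have iDY : Integrable (fun ω => 2 * Z ω * D ω * Y j ω) μ := by
      refine ((integrable_mul_of_abs_le hZM hC (hD.integrable_mul (h.memLp_two j))).const_mul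
        2).congr (ae_of_all _ fun ω => ?_)
      simp only [Pi.mul_apply]
      ring
    have iYsq := integrable_mul_of_abs_le hZM hC (h.integrable_sq j)
    have iV : Integrable (fun ω => Z ω * (partialSum v j ω - partialSum v i ω)) μ :=
      integrable_mul_of_abs_le hZM hC
        ((h.integrable_partialSum_var j).sub (h.integrable_partialSum_var i))
    have iDD : Integrable (fun ω => Z ω * D ω ^ 2 + 2 * Z ω * D ω * Y j ω) μ := iDsq.add iDY
    calc ∫ ω, Z ω * (partialSum Y (j + 1) ω - partialSum Y i ω) ^ 2 ∂μ
        = ∫ ω, Z ω * D ω ^ 2 + 2 * Z ω * D ω * Y j ω + Z ω * Y j ω ^ 2 ∂μ := by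
          congr! 2 with ω
          rw [partialSum_succ]
          ring
      _ = ∫ ω, Z ω * (partialSum v j ω - partialSum v i ω) ∂μ + ∫ ω, Z ω * v j ω ∂μ := by
          rw [integral_add iDD iYsq, integral_add iDsq iDY, ih,
            h.integral_mul_diff_eq_zero (Z := fun ω => 2 * Z ω * D ω)
              ((hZj.const_mul 2).mul hDm) iDY,
            h.integral_mul_diff_sq hZj hC, add_zero]
      _ = ∫ ω, Z ω * (partialSum v (j + 1) ω - partialSum v i ω) ∂μ := by
          rw [← integral_add iV (integrable_mul_of_abs_le hZM hC (h.integrable_var j))]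
          congr! 2 with ω
          rw [partialSum_succ]
          ring

lemma abs_integral_le_of_approx (h : IsMartingaleDifference μ ℱ Y v) {i : ℕ} {F B Z₁ Z₂ W : Ω → ℝ}
    {C₁ C₂ C₃ : ℝ} (hF : Integrable F μ) (hB : Integrable B μ) (hZ₁ : Measurable[ℱ i] Z₁)
    (hZ₂ : Measurable[ℱ i] Z₂) (hW : Measurable[ℱ i] W) (hZ₁C : ∀ ω, |Z₁ ω| ≤ C₁)
    (hZ₂C : ∀ ω, |Z₂ ω| ≤ C₂) (hWC : ∀ ω, |W ω| ≤ C₃)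
    (happrox : ∀ ω, |F ω - Z₁ ω * Y i ω - Z₂ ω * (Y i ω ^ 2 - v i ω)|
      ≤ B ω + W ω * (Y i ω ^ 2 - v i ω)) :
    |∫ ω, F ω ∂μ| ≤ ∫ ω, B ω ∂μ := by
  have hint {Z f : Ω → ℝ} {C : ℝ} (hZ : Measurable[ℱ i] Z) (hC : ∀ ω, |Z ω| ≤ C)
      (hf : Integrable f μ) : Integrable (fun ω => Z ω * f ω) μ :=
    integrable_mul_of_abs_le (hZ.mono (ℱ.le i) le_rfl) hC hf
  have iY : Integrable (Y i) μ := (h.memLp_two i).integrable one_le_two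
  have isq : Integrable (fun ω => Y i ω ^ 2 - v i ω) μ :=
    (h.integrable_sq i).sub (h.integrable_var i)
  have hcentred {Z : Ω → ℝ} {C : ℝ} (hZ : Measurable[ℱ i] Z) (hC : ∀ ω, |Z ω| ≤ C) :
      ∫ ω, Z ω * (Y i ω ^ 2 - v i ω) ∂μ = 0 := by
    simp only [mul_sub]
    rw [integral_sub (hint hZ hC (h.integrable_sq i)) (hint hZ hC (h.integrable_var i)),
      h.integral_mul_diff_sq hZ hC, sub_self]
  have i₁ := hint hZ₁ hZ₁C iY
  have i₂ := hint hZ₂ hZ₂C isq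
  have iW := hint hW hWC isq
  have i₁₂ : Integrable (fun ω => F ω - Z₁ ω * Y i ω) μ := hF.sub i₁
  have iBW : Integrable (fun ω => B ω + W ω * (Y i ω ^ 2 - v i ω)) μ := hB.add iW
  calc |∫ ω, F ω ∂μ|
      = |∫ ω, F ω - Z₁ ω * Y i ω - Z₂ ω * (Y i ω ^ 2 - v i ω) ∂μ| := by
        rw [integral_sub i₁₂ i₂, integral_sub hF i₁, h.integral_mul_diff_eq_zero hZ₁ i₁,
          hcentred hZ₂ hZ₂C, sub_zero, sub_zero]
    _ ≤ ∫ ω, B ω + W ω * (Y i ω ^ 2 - v i ω) ∂μ := by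
        rw [← norm_eq_abs]
        exact norm_integral_le_of_norm_le iBW (ae_of_all _ happrox)
    _ = ∫ ω, B ω ∂μ := by rw [integral_add hB iW, hcentred hW hWC, add_zero]

lemma integrable_smallStepCost (h : IsMartingaleDifference μ ℱ Y v) {q ε : ℝ} (hq : 1 ≤ q)
    (hε : 0 < ε) (i : ℕ) {τ d : Ω → ℝ} (hd : Measurable d) (hτ : Measurable τ)
    (hετ : ∀ ω, ε ^ 2 ≤ τ ω) :
    Integrable (fun ω => smallStepCost q ε (τ ω) (d ω) (v i ω)) μ := by
  refine integrable_of_abs_le (C := 2) (measurable_smallStepCost hτ hd (h.measurable_var i))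
    fun ω => ?_
  rw [abs_of_nonneg
    (smallStepCost_nonneg hε.le ((sq_nonneg ε).trans (hετ ω)) (h.var_nonneg i ω))]
  exact smallStepCost_le_two hq hε (hετ ω) (h.var_nonneg i ω)

lemma abs_integral_step_le (h : IsMartingaleDifference μ ℱ Y v) {p q ε : ℝ}
    (hpq : p.HolderConjugate q) (hε : 0 < ε) {i : ℕ} {τ d : Ω → ℝ} (hd : Measurable[ℱ i] d)
    (hτ : Measurable[ℱ i] τ) (hετ : ∀ ω, ε ^ 2 ≤ τ ω)
    (hYp : Integrable (fun ω => |Y i ω| ^ (2 * p)) μ) :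
    |∫ ω, Φ ((d ω - Y i ω) / √(τ ω)) ∂μ - ∫ ω, Φ (d ω / √(τ ω + v i ω)) ∂μ|
      ≤ stepConst q * (4 * (ε ^ (-(2 * p)) * ∫ ω, |Y i ω| ^ (2 * p) ∂μ)
        + 2 * ∫ ω, smallStepCost q ε (τ ω) (d ω) (v i ω) ∂μ) := by
  have hq : 1 ≤ q := hpq.symm.lt.le
  have hτ0 (ω : Ω) : 0 < τ ω := (pow_pos hε 2).trans_le (hετ ω)
  have hs (ω : Ω) : ε ≤ √(τ ω) := le_sqrt_of_sq_le (hετ ω)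
  have hτM : Measurable τ := hτ.mono (ℱ.le i) le_rfl
  have hdM : Measurable d := hd.mono (ℱ.le i) le_rfl
  have iΦ {f : Ω → ℝ} (hf : Measurable f) : Integrable (fun ω => Φ (f ω)) μ :=
    integrable_of_abs_le (measurable_stdNormalCDF.comp hf) fun ω => abs_stdNormalCDF_le_one _
  have iΦY : Integrable (fun ω => Φ ((d ω - Y i ω) / √(τ ω))) μ :=
    iΦ ((hdM.sub (h.measurable_diff i)).div hτM.sqrt)
  have iΦv : Integrable (fun ω => Φ (d ω / √(τ ω + v i ω))) μ :=
    iΦ (hdM.div (hτM.add (h.measurable_var i)).sqrt)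
  have icost := (h.integrable_smallStepCost hq hε i hdM hτM hετ).const_mul 2
  have iJ := (hYp.const_mul (ε ^ (-(2 * p)))).const_mul 4
  have hφ : Measurable φ := continuous_stdNormalPDF.measurable
  have hZ₁ : Measurable[ℱ i] fun ω => -φ (d ω / √(τ ω)) / √(τ ω) :=
    (hφ.comp (hd.div hτ.sqrt)).neg.div hτ.sqrt
  have hZ₂ : Measurable[ℱ i]
      fun ω => 1 / 2 * (-(d ω / √(τ ω)) * φ (d ω / √(τ ω))) / τ ω :=
    (((hd.div hτ.sqrt).neg.mul (hφ.comp (hd.div hτ.sqrt))).const_mul _).div hτ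
  have hZ₁C (ω : Ω) : |-φ (d ω / √(τ ω)) / √(τ ω)| ≤ 1 / ε := by
    rw [abs_div, abs_neg, abs_of_nonneg (stdNormalPDF_nonneg _), abs_of_nonneg (sqrt_nonneg _)]
    exact div_le_div₀ zero_le_one (stdNormalPDF_le_one _) hε (hs ω)
  have hZ₂C (ω : Ω) : |1 / 2 * (-(d ω / √(τ ω)) * φ (d ω / √(τ ω))) / τ ω| ≤ 1 / ε ^ 2 := by
    rw [abs_div, abs_of_pos (hτ0 ω), abs_mul, abs_of_pos one_half_pos]
    refine div_le_div₀ zero_le_one ?_ (by positivity) (hετ ω)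
    linarith [abs_neg_mul_stdNormalPDF_le_one (d ω / √(τ ω))]
  have hW : Measurable[ℱ i] fun ω => stepConst q * stepMultiplier q ε (τ ω) (d ω) (v i ω) :=
    (measurable_stepMultiplier hτ hd (h.measurable_var' i)).const_mul _
  have hWC (ω : Ω) : |stepConst q * stepMultiplier q ε (τ ω) (d ω) (v i ω)|
      ≤ stepConst q * (3 / ε ^ 2) := by
    have hC := stepConst_pos hpq.symm.pos
    rw [abs_mul, abs_of_pos hC]
    exact mul_le_mul_of_nonneg_left (abs_stepMultiplier_le hq hε (hετ ω)) hC.le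
  rw [← integral_sub iΦY iΦv, ← integral_const_mul, ← integral_const_mul, ← integral_const_mul,
    ← integral_add iJ icost, ← integral_const_mul]
  refine h.abs_integral_le_of_approx (iΦY.sub iΦv) ((iJ.add icost).const_mul _) hZ₁ hZ₂ hW
    hZ₁C hZ₂C hWC fun ω => ?_
  refine (abs_step_sub_martingale_le hpq hε (hετ ω) (h.var_nonneg i ω)).trans_eq ?_
  ring

lemma integral_smallStepCost_le (h : IsMartingaleDifference μ ℱ Y v) {q ε : ℝ} (hq : 1 ≤ q)
    (hε : 0 < ε) {i n : ℕ} (hin : i ≤ n) {τ d : Ω → ℝ} (hd : Measurable[ℱ i] d)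
    (hτ : Measurable[ℱ i] τ) (hετ : ∀ ω, ε ^ 2 ≤ τ ω)
    (hvar : ∀ ω, partialSum v n ω - partialSum v i ω ≤ τ ω + v i ω) :
    ∫ ω, smallStepCost q ε (τ ω) (d ω) (v i ω) ∂μ ≤ 2 * 13 ^ (1 + q / 2) *
      ∫ ω, smallStepCost q ε (τ ω) (d ω - (partialSum Y n ω - partialSum Y i ω)) (v i ω) ∂μ := by
  have hq0 : 0 < q := by linarith
  have hτ0 (ω : Ω) : 0 < τ ω := (pow_pos hε 2).trans_le (hετ ω)
  have hτM : Measurable τ := hτ.mono (ℱ.le i) le_rfl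
  have hdM : Measurable d := hd.mono (ℱ.le i) le_rfl
  have hDM : Measurable fun ω => partialSum Y n ω - partialSum Y i ω :=
    (h.measurable_partialSum n).sub (h.measurable_partialSum i)
  set H : Ω → ℝ := fun ω => smallStepCost q ε (τ ω) (d ω) (v i ω)
  set Z : Ω → ℝ := fun ω => H ω / (6 * τ ω)
  have hH0 (ω : Ω) : 0 ≤ H ω := smallStepCost_nonneg hε.le (hτ0 ω).le (h.var_nonneg i ω)
  have hZ0 (ω : Ω) : 0 ≤ Z ω := div_nonneg (hH0 ω) (by linarith [hτ0 ω])
  have hZm : Measurable[ℱ i] Z :=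
    (measurable_smallStepCost hτ hd (h.measurable_var' i)).div (hτ.const_mul 6)
  have hZC (ω : Ω) : |Z ω| ≤ 2 / (6 * ε ^ 2) := by
    rw [abs_of_nonneg (hZ0 ω)]
    exact div_le_div₀ zero_le_two (smallStepCost_le_two hq hε (hετ ω) (h.var_nonneg i ω))
      (by positivity) (by linarith [hετ ω])
  have hint {f : Ω → ℝ} (hf : Integrable f μ) : Integrable (fun ω => Z ω * f ω) μ :=
    integrable_mul_of_abs_le (hZm.mono (ℱ.le i) le_rfl) hZC hf
  have iH : Integrable H μ := h.integrable_smallStepCost hq hε i hdM hτM hετ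
  have iG := (h.integrable_smallStepCost hq hε i (hdM.sub hDM) hτM hετ).const_mul (13 ^ (1 + q / 2))
  have iZD := hint ((h.memLp_two_partialSum n).sub (h.memLp_two_partialSum i)).integrable_sq
  have hsplit : ∫ ω, H ω ∂μ ≤ ∫ ω, Z ω * (partialSum Y n ω - partialSum Y i ω) ^ 2 ∂μ
      + ∫ ω, 13 ^ (1 + q / 2) * smallStepCost q ε (τ ω)
          (d ω - (partialSum Y n ω - partialSum Y i ω)) (v i ω) ∂μ :=
    (integral_mono iH (iZD.add iG) fun ω =>
      smallStepCost_le_add hq0 hε.le (hτ0 ω) (h.var_nonneg i ω)).trans_eq (integral_add iZD iG)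
  have hhalf : ∫ ω, Z ω * (partialSum Y n ω - partialSum Y i ω) ^ 2 ∂μ ≤ 1 / 2 * ∫ ω, H ω ∂μ := by
    rw [h.integral_mul_sq_sub_partialSum hin hZm hZC, ← integral_const_mul]
    refine integral_mono
      (hint ((h.integrable_partialSum_var n).sub (h.integrable_partialSum_var i)))
      (iH.const_mul _) fun ω => ?_
    exact (mul_le_mul_of_nonneg_left (hvar ω) (hZ0 ω)).trans
      (smallStepCost_div_mul_add_le hε.le (hτ0 ω) (h.var_nonneg i ω))
  rw [integral_const_mul] at hsplit
  linarith

lemma abs_integral_succ_sub_le (h : IsMartingaleDifference μ ℱ Y v) {p q ε c : ℝ}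
    (hpq : p.HolderConjugate q) (hε : 0 < ε) {n : ℕ} (hc : ∀ ω, partialSum v n ω + ε ^ 2 ≤ c)
    (hYp : ∀ i, Integrable (fun ω => |Y i ω| ^ (2 * p)) μ) {i : ℕ} (hi : i < n) (z : ℝ) :
    |∫ ω, Φ ((z - partialSum Y (i + 1) ω) / √(c - partialSum v (i + 1) ω)) ∂μ
        - ∫ ω, Φ ((z - partialSum Y i ω) / √(c - partialSum v i ω)) ∂μ|
      ≤ stepConst q * (4 * (ε ^ (-(2 * p)) * ∫ ω, |Y i ω| ^ (2 * p) ∂μ)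
        + 2 * (2 * 13 ^ (1 + q / 2) * ∫ ω,
          smallStepCost q ε (c - partialSum v (i + 1) ω) (z - partialSum Y n ω) (v i ω) ∂μ)) := by
  set τ : Ω → ℝ := fun ω => c - partialSum v (i + 1) ω
  have hετ (ω : Ω) : ε ^ 2 ≤ τ ω := by linarith [hc ω, h.monotone_partialSum_var ω hi]
  have hadd (ω : Ω) : τ ω + v i ω = c - partialSum v i ω := by
    simp only [τ, partialSum_succ]
    ring
  have hd : Measurable[ℱ i] fun ω => z - partialSum Y i ω :=
    (h.measurable_partialSum' i).const_sub z
  have hτ : Measurable[ℱ i] τ := (h.measurable_partialSum_var' i).const_sub c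
  have hstep := h.abs_integral_step_le hpq hε hd hτ hετ (hYp i)
  have htransfer := h.integral_smallStepCost_le hpq.symm.lt.le hε hi.le hd hτ hετ
    fun ω => by linarith [hc ω, hadd ω, sq_nonneg ε]
  simp only [hadd, sub_sub, add_sub_cancel, ← partialSum_succ] at hstep htransfer
  refine hstep.trans ?_
  have := stepConst_pos hpq.symm.pos
  gcongr

end IsMartingaleDifference

/-- The constant of the telescoped error bound: jumps enter through `stepConst`, small jumps in
addition through the cost of moving the kernel to the endpoint and of summing along a path. -/
noncomputable def telescopeConst (q : ℝ) : ℝ :=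
  stepConst q * (4 + 4 * 13 ^ (1 + q / 2) * (3 ^ (1 + q / 2) / (q / 2)))

lemma telescopeConst_pos {q : ℝ} (hq : 0 < q) : 0 < telescopeConst q := by
  have := stepConst_pos hq
  unfold telescopeConst
  positivity

section Telescope

variable {Ω : Type*} {mΩ : MeasurableSpace Ω} {μ : Measure Ω}

lemma integrable_max_abs_rpow_neg [IsFiniteMeasure μ] {a q : ℝ} (ha : 0 < a) (hq : 0 ≤ q)
    {f : Ω → ℝ} (hf : Measurable f) : Integrable (fun ω => max a |f ω| ^ (-q)) μ := by
  refine integrable_of_abs_le (C := a ^ (-q)) ((measurable_const.max hf.abs).pow_const _)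
    fun ω => ?_
  have : 0 < max a |f ω| := lt_max_of_lt_left ha
  rw [abs_of_nonneg (by positivity)]
  exact rpow_le_rpow_of_nonpos ha (le_max_left _ _) (neg_nonpos.2 hq)

namespace IsMartingaleDifference

variable {ℱ : Filtration ℕ mΩ} {Y v : ℕ → Ω → ℝ}

lemma sum_integral_smallStepCost_le [IsFiniteMeasure μ] (h : IsMartingaleDifference μ ℱ Y v)
    {q ε a c : ℝ} (hq : 1 ≤ q) (hε : 0 < ε) (hεa : ε ≤ a) {n : ℕ}
    (hc : ∀ ω, partialSum v n ω + a ^ 2 ≤ c) {d : Ω → ℝ} (hd : Measurable d) :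
    ∑ i ∈ range n, ∫ ω, smallStepCost q ε (c - partialSum v (i + 1) ω) (d ω) (v i ω) ∂μ
      ≤ ε ^ q * (3 ^ (1 + q / 2) / (q / 2)) * ∫ ω, max a |d ω| ^ (-q) ∂μ := by
  have ha : 0 < a := hε.trans_le hεa
  have hτ (ω : Ω) (i : ℕ) (hi : i ≤ n) : a ^ 2 ≤ c - partialSum v i ω := by
    linarith [hc ω, h.monotone_partialSum_var ω hi]
  have hcost (i : ℕ) (hi : i ∈ range n) : Integrable
      (fun ω => smallStepCost q ε (c - partialSum v (i + 1) ω) (d ω) (v i ω)) μ :=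
    h.integrable_smallStepCost hq hε i hd
      (((h.measurable_partialSum_var' i).mono (ℱ.le i) le_rfl).const_sub c)
      fun ω => (pow_le_pow_left₀ hε.le hεa 2).trans (hτ ω _ (mem_range.1 hi))
  rw [← integral_finsetSum _ hcost, ← integral_const_mul]
  refine integral_mono (integrable_finsetSum _ hcost)
    ((integrable_max_abs_rpow_neg ha (by linarith) hd).const_mul _) fun ω => ?_
  exact sum_smallStepCost_le (by linarith) hε.le ha (hτ ω) (h.var_nonneg · ω)
    fun i => by rw [partialSum_succ]; ring

lemma abs_integral_sub_stdNormalCDF_le [IsProbabilityMeasure μ]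
    (h : IsMartingaleDifference μ ℱ Y v) {p q ε a c : ℝ} (hpq : p.HolderConjugate q)
    (hε : 0 < ε) (hεa : ε ≤ a) {n : ℕ} (hc : ∀ ω, partialSum v n ω + a ^ 2 ≤ c)
    (hYp : ∀ i, Integrable (fun ω => |Y i ω| ^ (2 * p)) μ) (z : ℝ) :
    |∫ ω, Φ ((z - partialSum Y n ω) / √(c - partialSum v n ω)) ∂μ - Φ (z / √c)|
      ≤ telescopeConst q * (ε ^ (-(2 * p)) * ∑ i ∈ range n, ∫ ω, |Y i ω| ^ (2 * p) ∂μ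
        + ε ^ q * ∫ ω, max a |z - partialSum Y n ω| ^ (-q) ∂μ) := by
  set E : ℕ → ℝ := fun i => ∫ ω, Φ ((z - partialSum Y i ω) / √(c - partialSum v i ω)) ∂μ with hE
  set M : ℝ := ε ^ (-(2 * p)) * ∑ i ∈ range n, ∫ ω, |Y i ω| ^ (2 * p) ∂μ with hM
  set I : ℝ := ∫ ω, max a |z - partialSum Y n ω| ^ (-q) ∂μ
  have hεc (ω : Ω) : partialSum v n ω + ε ^ 2 ≤ c := by
    linarith [hc ω, pow_le_pow_left₀ hε.le hεa 2]
  have hq := hpq.symm.pos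
  have hM0 : 0 ≤ M := mul_nonneg (by positivity) (sum_nonneg fun i _ => by positivity)
  have hI0 : 0 ≤ ε ^ q * I := mul_nonneg (by positivity) (integral_nonneg fun ω => by
    have : 0 ≤ max a |z - partialSum Y n ω| := (abs_nonneg _).trans (le_max_right _ _)
    positivity)
  have hK : 0 ≤ 4 * 13 ^ (1 + q / 2) * (3 ^ (1 + q / 2) / (q / 2)) := by positivity
  have hC := stepConst_pos hq
  have hcost := h.sum_integral_smallStepCost_le hpq.symm.lt.le hε hεa hc
    ((h.measurable_partialSum n).const_sub z)
  calc _ = |∑ i ∈ range n, (E (i + 1) - E i)| := by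
        rw [sum_range_sub]
        simp [hE, partialSum]
    _ ≤ ∑ i ∈ range n, |E (i + 1) - E i| := abs_sum_le_sum_abs _ _
    _ ≤ _ := sum_le_sum fun i hi =>
        h.abs_integral_succ_sub_le hpq hε hεc hYp (mem_range.1 hi) z
    _ = stepConst q * (4 * M + 4 * 13 ^ (1 + q / 2) * ∑ i ∈ range n, ∫ ω,
          smallStepCost q ε (c - partialSum v (i + 1) ω) (z - partialSum Y n ω) (v i ω) ∂μ) := by
        simp only [hM, ← mul_sum, sum_add_distrib]
        ring
    _ ≤ stepConst q * (4 * M + 4 * 13 ^ (1 + q / 2)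
          * (ε ^ q * (3 ^ (1 + q / 2) / (q / 2)) * I)) := by gcongr
    _ ≤ telescopeConst q * (M + ε ^ q * I) := by
        unfold telescopeConst
        rw [mul_assoc (stepConst q)]
        refine mul_le_mul_of_nonneg_left ?_ hC.le
        linarith [mul_nonneg hK hM0]

end IsMartingaleDifference

end Telescope

section Kolmogorov

variable {Ω : Type*} {mΩ : MeasurableSpace Ω} {μ : Measure Ω} {T : Ω → ℝ}

/-- The Kolmogorov distance between the law of `T` under `μ` and the standard normal law. -/
noncomputable def kolmogorovDist (μ : Measure Ω) (T : Ω → ℝ) : ℝ :=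
  ⨆ z, |μ.real {ω | T ω ≤ z} - Φ z|

lemma kolmogorovDist_le {D : ℝ} (h : ∀ z, |μ.real {ω | T ω ≤ z} - Φ z| ≤ D) :
    kolmogorovDist μ T ≤ D :=
  ciSup_le h

lemma abs_measureReal_sub_stdNormalCDF_le_one [IsProbabilityMeasure μ] (s : Set Ω) (z : ℝ) :
    |μ.real s - Φ z| ≤ 1 := by
  have hs : 0 ≤ μ.real s := measureReal_nonneg
  have hs1 : μ.real s ≤ 1 := measureReal_le_one
  rw [abs_le]
  constructor <;> linarith [stdNormalCDF_nonneg z, stdNormalCDF_le_one z]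

variable [IsProbabilityMeasure μ]

lemma abs_measureReal_sub_stdNormalCDF_le (z : ℝ) :
    |μ.real {ω | T ω ≤ z} - Φ z| ≤ kolmogorovDist μ T :=
  le_ciSup (f := fun z => |μ.real {ω | T ω ≤ z} - Φ z|)
    ⟨1, by rintro _ ⟨w, rfl⟩; exact abs_measureReal_sub_stdNormalCDF_le_one _ w⟩ z

lemma kolmogorovDist_nonneg : 0 ≤ kolmogorovDist μ T :=
  (abs_nonneg _).trans (abs_measureReal_sub_stdNormalCDF_le 0)

lemma measureReal_abs_sub_le_le (hT : Measurable T) (z : ℝ) {r : ℝ} (hr : 0 < r) :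
    μ.real {ω | |z - T ω| ≤ r} ≤ 3 * r + 2 * kolmogorovDist μ T := by
  have hsub : {ω | |z - T ω| ≤ r} ⊆ {ω | T ω ≤ z + r} \ {ω | T ω ≤ z - 2 * r} := by
    intro ω (hω : |z - T ω| ≤ r)
    obtain ⟨hlow, hup⟩ := abs_le.1 hω
    exact ⟨show T ω ≤ z + r by linarith, fun h : T ω ≤ z - 2 * r => by linarith⟩
  have hdiff : μ.real {ω | |z - T ω| ≤ r}
      ≤ μ.real {ω | T ω ≤ z + r} - μ.real {ω | T ω ≤ z - 2 * r} := by
    have hnested : {ω | T ω ≤ z - 2 * r} ⊆ {ω | T ω ≤ z + r} :=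
      fun ω (hω : T ω ≤ z - 2 * r) => show T ω ≤ z + r by linarith
    rw [← measureReal_sdiff hnested (measurableSet_le hT measurable_const)]
    exact measureReal_mono hsub
  have hlip := abs_stdNormalCDF_sub_le (z + r) (z - 2 * r)
  rw [show z + r - (z - 2 * r) = 3 * r by ring, abs_of_pos (by positivity : 0 < 3 * r)] at hlip
  linarith [(abs_le.1 (abs_measureReal_sub_stdNormalCDF_le (μ := μ) (T := T) (z + r))).2,
    (abs_le.1 (abs_measureReal_sub_stdNormalCDF_le (μ := μ) (T := T) (z - 2 * r))).1,
    (abs_le.1 hlip).2]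

lemma measureReal_le_max_rpow_neg_le (hT : Measurable T) (z : ℝ) {a q t : ℝ} (ha : 0 < a)
    (hq : 0 < q) (ht : 0 < t) : μ.real {ω | t ≤ max a |z - T ω| ^ (-q)}
      ≤ 3 * t ^ (-q⁻¹) + 2 * kolmogorovDist μ T := by
  refine (measureReal_mono fun ω (hω : t ≤ _) => ?_).trans
    (measureReal_abs_sub_le_le hT z (rpow_pos_of_pos ht _))
  have hmax : 0 < max a |z - T ω| := lt_max_of_lt_left ha
  have hle := rpow_le_rpow_of_nonpos ht hω (neg_nonpos.2 (inv_nonneg.2 hq.le))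
  rw [← rpow_mul hmax.le, neg_mul_neg, mul_inv_cancel₀ hq.ne', rpow_one] at hle
  exact (le_max_right _ _).trans hle

lemma integral_rpow_neg_inv {a q : ℝ} (ha : 0 < a) (hq : 1 < q) :
    ∫ t in (0 : ℝ)..a ^ (-q), t ^ (-q⁻¹) = q / (q - 1) * a ^ (1 - q) := by
  have hq0 : q ≠ 0 := by positivity
  have hq1 : q - 1 ≠ 0 := by linarith
  have hinv : -q⁻¹ + 1 = (q - 1) / q := by field_simp; ring
  have hpos : 0 < (q - 1) / q := div_pos (by linarith) (by linarith)
  rw [integral_rpow (Or.inl (by linarith)), hinv, zero_rpow hpos.ne', ← rpow_mul ha.le,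
    show -q * ((q - 1) / q) = 1 - q by field_simp; ring, sub_zero]
  field_simp

lemma integral_max_abs_rpow_neg_le (hT : Measurable T) (z : ℝ) {a q : ℝ} (ha : 0 < a)
    (hq : 1 < q) : ∫ ω, max a |z - T ω| ^ (-q) ∂μ
      ≤ 3 * (q / (q - 1)) * a ^ (1 - q) + 2 * kolmogorovDist μ T * a ^ (-q) := by
  have hmax (ω : Ω) : 0 < max a |z - T ω| := lt_max_of_lt_left ha
  have hM : 0 ≤ a ^ (-q) := by positivity
  have hr : IntervalIntegrable (fun t : ℝ => t ^ (-q⁻¹)) volume 0 (a ^ (-q)) :=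
    intervalIntegral.intervalIntegrable_rpow' (neg_lt_neg (inv_lt_one_of_one_lt₀ hq))
  have hlevel : Antitone fun t : ℝ => μ.real {ω | t ≤ max a |z - T ω| ^ (-q)} :=
    fun s t hst => measureReal_mono fun ω hω => hst.trans hω
  rw [(integrable_max_abs_rpow_neg ha (by linarith) (hT.const_sub z)
    ).integral_eq_integral_Ioc_meas_le (M := a ^ (-q))
    (ae_of_all _ fun ω => (rpow_pos_of_pos (hmax ω) _).le)
    (ae_of_all _ fun ω => rpow_le_rpow_of_nonpos ha (le_max_left _ _) (by linarith)),
    ← intervalIntegral.integral_of_le hM]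
  calc ∫ t in (0 : ℝ)..a ^ (-q), μ.real {ω | t ≤ max a |z - T ω| ^ (-q)}
      ≤ ∫ t in (0 : ℝ)..a ^ (-q), (3 * t ^ (-q⁻¹) + 2 * kolmogorovDist μ T) :=
        intervalIntegral.integral_mono_on_of_le_Ioo hM hlevel.intervalIntegrable
          ((hr.const_mul 3).add intervalIntegrable_const) fun t ht =>
            measureReal_le_max_rpow_neg_le hT z ha (by linarith) ht.1
    _ = _ := by
        rw [intervalIntegral.integral_add (hr.const_mul 3) intervalIntegrable_const,
          intervalIntegral.integral_const_mul, integral_rpow_neg_inv ha hq,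
          intervalIntegral.integral_const, smul_eq_mul]
        ring

end Kolmogorov

section Smoothing

lemma one_sub_stdNormalCDF_div_le {s l h y : ℝ} (hs : 0 < s) (hsl : s ≤ l) (hh : 0 < h)
    (hy : h ≤ y) : 1 - Φ (y / s) ≤ l ^ 2 * max h |y| ^ (-2 : ℝ) := by
  have hy0 : 0 < y := hh.trans_le hy
  calc 1 - Φ (y / s) ≤ 1 / (y / s) ^ 2 := one_sub_stdNormalCDF_le (div_pos hy0 hs)
    _ = s ^ 2 * y ^ (-2 : ℝ) := by
        rw [div_pow, one_div_div, rpow_neg hy0.le, rpow_two, div_eq_mul_inv]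
    _ ≤ l ^ 2 * max h |y| ^ (-2 : ℝ) := by
        rw [abs_of_pos hy0, max_eq_right hy]
        gcongr

lemma stdNormalCDF_div_le {s l h y : ℝ} (hs : 0 < s) (hsl : s ≤ l) (hh : 0 < h)
    (hy : y ≤ -h) : Φ (y / s) ≤ l ^ 2 * max h |y| ^ (-2 : ℝ) := by
  have hy0 : 0 < -y := by linarith
  calc Φ (y / s) = Φ (-(-y / s)) := by rw [neg_div, neg_neg]
    _ ≤ 1 / (-y / s) ^ 2 := stdNormalCDF_neg_le (div_pos hy0 hs)
    _ = s ^ 2 * (-y) ^ (-2 : ℝ) := by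
        rw [div_pow, one_div_div, rpow_neg hy0.le, rpow_two, div_eq_mul_inv]
    _ ≤ l ^ 2 * max h |y| ^ (-2 : ℝ) := by
        rw [abs_of_neg (by linarith), max_eq_right (by linarith)]
        gcongr

variable {Ω : Type*} {mΩ : MeasurableSpace Ω} {μ : Measure Ω} {T τ : Ω → ℝ}

lemma integral_le_add_measureReal [IsFiniteMeasure μ] {f g : Ω → ℝ} {s : Set Ω}
    (hf : Integrable f μ) (hg : Integrable g μ) (hs : MeasurableSet s) (hf1 : ∀ ω, f ω ≤ 1)
    (hg0 : ∀ ω, 0 ≤ g ω) (hfg : ∀ ω ∉ s, f ω ≤ g ω) : ∫ ω, f ω ∂μ ≤ ∫ ω, g ω ∂μ + μ.real s := by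
  have hsi : Integrable (s.indicator fun _ => (1 : ℝ)) μ := (integrable_const 1).indicator hs
  have hs1 : ∫ ω, s.indicator (fun _ => (1 : ℝ)) ω ∂μ = μ.real s := integral_indicator_one hs
  rw [← hs1, ← integral_add hg hsi]
  refine integral_mono hf (hg.add hsi) fun ω => ?_
  by_cases hω : ω ∈ s
  · simpa [hω] using (hf1 ω).trans (le_add_of_nonneg_left (hg0 ω))
  · simpa [hω] using hfg ω hω

variable [IsProbabilityMeasure μ]

lemma integrable_stdNormalCDF_div_sqrt (hT : Measurable T) (hτ : Measurable τ) (w : ℝ) :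
    Integrable (fun ω => Φ ((w - T ω) / √(τ ω))) μ :=
  integrable_of_abs_le (measurable_stdNormalCDF.comp ((hT.const_sub w).div hτ.sqrt))
    fun _ => abs_stdNormalCDF_le_one _

lemma integral_sq_mul_max_abs_rpow_neg_two_le (hT : Measurable T) {l : ℝ} (hl : 0 < l) (w : ℝ) :
    ∫ ω, l ^ 2 * max (4 * l) |w - T ω| ^ (-2 : ℝ) ∂μ ≤ 3 / 2 * l + kolmogorovDist μ T / 8 := by
  have h4l : 0 < 4 * l := by positivity
  rw [integral_const_mul]
  refine (mul_le_mul_of_nonneg_left (integral_max_abs_rpow_neg_le hT w h4l one_lt_two)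
    (sq_nonneg l)).trans_eq ?_
  rw [show (1 - 2 : ℝ) = -1 by norm_num, rpow_neg_one, rpow_neg h4l.le, rpow_two]
  field_simp
  ring

lemma measureReal_le_integral_stdNormalCDF_add (hT : Measurable T) (hτ : Measurable τ)
    (hτ0 : ∀ ω, 0 < τ ω) {l : ℝ} (hl : 0 < l) (z : ℝ) :
    μ.real {ω | T ω ≤ z} ≤ ∫ ω, Φ ((z + 4 * l - T ω) / √(τ ω)) ∂μ
      + (3 / 2 * l + kolmogorovDist μ T / 8) + μ.real {ω | l ^ 2 < τ ω} := by
  have h4l : 0 < 4 * l := by positivity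
  have hTz : MeasurableSet {ω | T ω ≤ z} := measurableSet_le hT measurable_const
  have hTint : ∫ ω, {ω | T ω ≤ z}.indicator (fun _ => (1 : ℝ)) ω ∂μ = μ.real {ω | T ω ≤ z} :=
    integral_indicator_one hTz
  have hΦ := integrable_stdNormalCDF_div_sqrt (μ := μ) hT hτ (z + 4 * l)
  have hmax := (integrable_max_abs_rpow_neg (μ := μ) h4l zero_le_two
    (hT.const_sub (z + 4 * l))).const_mul (l ^ 2)
  have hmax0 (ω : Ω) : 0 ≤ l ^ 2 * max (4 * l) |z + 4 * l - T ω| ^ (-2 : ℝ) := by positivity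
  have hle := integral_le_add_measureReal (μ := μ) ((integrable_const (1 : ℝ)).indicator hTz)
    (hΦ.add hmax) (measurableSet_lt measurable_const hτ : MeasurableSet {ω | l ^ 2 < τ ω})
    (Set.indicator_le_self' fun _ _ => zero_le_one)
    (fun ω => add_nonneg (stdNormalCDF_nonneg _) (hmax0 ω)) fun ω hω =>
      Set.indicator_apply_le' (fun h : T ω ≤ z => by
        have := one_sub_stdNormalCDF_div_le (sqrt_pos.2 (hτ0 ω))
          (sqrt_le_left hl.le |>.2 (not_lt.1 hω)) h4l (by linarith : 4 * l ≤ z + 4 * l - T ω)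
        simp only [Pi.add_apply]
        linarith) fun _ => add_nonneg (stdNormalCDF_nonneg _) (hmax0 ω)
  simp only [Pi.add_apply] at hle
  rw [hTint, integral_add hΦ hmax] at hle
  linarith [integral_sq_mul_max_abs_rpow_neg_two_le (μ := μ) hT hl (z + 4 * l)]

lemma integral_stdNormalCDF_le_measureReal_add (hT : Measurable T) (hτ : Measurable τ)
    (hτ0 : ∀ ω, 0 < τ ω) {l : ℝ} (hl : 0 < l) (z : ℝ) :
    ∫ ω, Φ ((z - 4 * l - T ω) / √(τ ω)) ∂μ ≤ μ.real {ω | T ω ≤ z}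
      + (3 / 2 * l + kolmogorovDist μ T / 8) + μ.real {ω | l ^ 2 < τ ω} := by
  have h4l : 0 < 4 * l := by positivity
  have hTz : MeasurableSet {ω | T ω ≤ z} := measurableSet_le hT measurable_const
  have hTint : ∫ ω, {ω | T ω ≤ z}.indicator (fun _ => (1 : ℝ)) ω ∂μ = μ.real {ω | T ω ≤ z} :=
    integral_indicator_one hTz
  have hind := (integrable_const (μ := μ) (1 : ℝ)).indicator hTz
  have hmax := (integrable_max_abs_rpow_neg (μ := μ) h4l zero_le_two
    (hT.const_sub (z - 4 * l))).const_mul (l ^ 2)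
  have hmax0 (ω : Ω) : 0 ≤ l ^ 2 * max (4 * l) |z - 4 * l - T ω| ^ (-2 : ℝ) := by positivity
  have hle := integral_le_add_measureReal (integrable_stdNormalCDF_div_sqrt hT hτ (z - 4 * l))
    (hind.add hmax) (measurableSet_lt measurable_const hτ : MeasurableSet {ω | l ^ 2 < τ ω})
    (fun ω => stdNormalCDF_le_one _)
    (fun ω => add_nonneg (Set.indicator_nonneg (fun _ _ => zero_le_one) ω) (hmax0 ω))
    fun ω hω => by
      rcases le_or_gt (T ω) z with h | h
      · have hTω : ω ∈ {ω | T ω ≤ z} := h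
        simp only [Pi.add_apply, Set.indicator_of_mem hTω]
        linarith [stdNormalCDF_le_one ((z - 4 * l - T ω) / √(τ ω)), hmax0 ω]
      · have hTω : ω ∉ {ω | T ω ≤ z} := not_le.2 h
        simp only [Pi.add_apply, Set.indicator_of_notMem hTω, zero_add]
        exact stdNormalCDF_div_le (sqrt_pos.2 (hτ0 ω))
          (sqrt_le_left hl.le |>.2 (not_lt.1 hω)) h4l (by linarith)
  simp only [Pi.add_apply] at hle
  rw [integral_add hind hmax, hTint] at hle
  linarith [integral_sq_mul_max_abs_rpow_neg_two_le (μ := μ) hT hl (z - 4 * l)]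

lemma abs_measureReal_sub_stdNormalCDF_le_of_smoothed (hT : Measurable T) (hτ : Measurable τ)
    (hτ0 : ∀ ω, 0 < τ ω) {E l : ℝ} (hl : 0 < l)
    (hE : ∀ w, |∫ ω, Φ ((w - T ω) / √(τ ω)) ∂μ - Φ w| ≤ E) (z : ℝ) :
    |μ.real {ω | T ω ≤ z} - Φ z|
      ≤ E + μ.real {ω | l ^ 2 < τ ω} + 6 * l + kolmogorovDist μ T / 8 := by
  have hup := measureReal_le_integral_stdNormalCDF_add (μ := μ) hT hτ hτ0 hl z
  have hlow := integral_stdNormalCDF_le_measureReal_add (μ := μ) hT hτ hτ0 hl z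
  have hlip_up := abs_stdNormalCDF_sub_le (z + 4 * l) z
  have hlip_low := abs_stdNormalCDF_sub_le z (z - 4 * l)
  rw [add_sub_cancel_left, abs_of_pos (by positivity : 0 < 4 * l)] at hlip_up
  rw [sub_sub_cancel, abs_of_pos (by positivity : 0 < 4 * l)] at hlip_low
  rw [abs_le]
  constructor
  · linarith [(abs_le.1 (hE (z - 4 * l))).1, (abs_le.1 hlip_low).2]
  · linarith [(abs_le.1 (hE (z + 4 * l))).2, (abs_le.1 hlip_up).2]

end Smoothing

section BoundedVariance

lemma abs_stdNormalCDF_div_sqrt_sub_le {c L : ℝ} (hc : 1 ≤ c) (hL : 0 ≤ L) (hcL : c ≤ L ^ 2)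
    (z : ℝ) : |Φ (z / √c) - Φ z| ≤ (c - 1) * L := by
  have hs1 : 1 ≤ √c := one_le_sqrt.2 hc
  have hsL : √c ≤ L := sqrt_le_left hL |>.2 hcL
  have hsc : √c ≤ c := by nlinarith [sq_sqrt (zero_le_one.trans hc)]
  have hinv : |(√c)⁻¹ - 1| ≤ c - 1 := by
    have hinv1 : (√c)⁻¹ ≤ 1 := inv_le_one_of_one_le₀ hs1
    have htangent : 2 - √c ≤ (√c)⁻¹ := by
      rw [← one_div, le_div_iff₀ (by linarith)]
      nlinarith [sq_nonneg (√c - 1)]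
    rw [abs_of_nonpos (by linarith)]
    linarith
  have hscale := abs_stdNormalCDF_mul_sub_le (y := z) (inv_pos.2 (by linarith : 0 < L))
    (inv_le_one_of_one_le₀ (hs1.trans hsL)) (inv_anti₀ (by linarith) hsL)
  rw [← div_eq_mul_inv, div_inv_eq_mul] at hscale
  exact hscale.trans (mul_le_mul_of_nonneg_right hinv hL)

lemma rpow_mul_integral_max_abs_rpow_neg_le {Ω : Type*} {mΩ : MeasurableSpace Ω} {μ : Measure Ω}
    [IsProbabilityMeasure μ] {T : Ω → ℝ} (hT : Measurable T) {q ε A : ℝ} (hq : 1 < q) (hε : 0 < ε)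
    (hA : 1 ≤ A) (z : ℝ) : ε ^ q * ∫ ω, max (A * ε) |z - T ω| ^ (-q) ∂μ
      ≤ 3 * (q / (q - 1)) * ε + 2 * kolmogorovDist μ T / A := by
  have hA0 : 0 < A := by linarith
  have hD : 0 ≤ kolmogorovDist μ T := kolmogorovDist_nonneg
  have : 0 ≤ q / (q - 1) := div_nonneg (by linarith) (by linarith)
  have hmain : ε ^ q * (A * ε) ^ (1 - q) ≤ ε := by
    calc ε ^ q * (A * ε) ^ (1 - q) = A ^ (1 - q) * (ε ^ q * ε ^ (1 - q)) := by
          rw [mul_rpow hA0.le hε.le]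
          ring
      _ = A ^ (1 - q) * ε := by rw [← rpow_add hε, add_sub_cancel, rpow_one]
      _ ≤ ε := mul_le_of_le_one_left hε.le (rpow_le_one_of_one_le_of_nonpos hA (by linarith))
  have hdist : ε ^ q * (A * ε) ^ (-q) ≤ A⁻¹ := by
    calc ε ^ q * (A * ε) ^ (-q) = A ^ (-q) * (ε ^ q * ε ^ (-q)) := by
          rw [mul_rpow hA0.le hε.le]
          ring
      _ = A ^ (-q) := by rw [← rpow_add hε, add_neg_cancel, rpow_zero, mul_one]
      _ ≤ A ^ (-1 : ℝ) := rpow_le_rpow_of_exponent_le hA (by linarith)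
      _ = A⁻¹ := rpow_neg_one A
  calc _ ≤ ε ^ q * (3 * (q / (q - 1)) * (A * ε) ^ (1 - q)
          + 2 * kolmogorovDist μ T * (A * ε) ^ (-q)) := by
        gcongr
        exact integral_max_abs_rpow_neg_le hT z (by positivity) hq
    _ = 3 * (q / (q - 1)) * (ε ^ q * (A * ε) ^ (1 - q))
          + 2 * kolmogorovDist μ T * (ε ^ q * (A * ε) ^ (-q)) := by ring
    _ ≤ 3 * (q / (q - 1)) * ε + 2 * kolmogorovDist μ T * A⁻¹ := by gcongr

/-- The remaining variance in the Lindeberg argument is kept above `(floorConst q * ε) ^ 2`; the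
factor is so large that the Kolmogorov distance reappears with a coefficient at most `1 / 4`. -/
noncomputable def floorConst (q : ℝ) : ℝ := 8 * telescopeConst q + 1

/-- A bound for the square root of the remaining variance in units of `ε`. -/
noncomputable def spreadConst (q : ℝ) : ℝ := √(floorConst q ^ 2 + 2)

/-- The constant of the error bound for the smoothed distribution function. -/
noncomputable def smoothedConst (q : ℝ) : ℝ :=
  telescopeConst q * (1 + 3 * (q / (q - 1))) + (1 + floorConst q ^ 2) * spreadConst q

/-- The constant of the Berry-Esseen bound when the conditional variance is bounded. -/
noncomputable def boundedVarConst (q : ℝ) : ℝ := 2 * (smoothedConst q + 1 + 6 * spreadConst q)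

lemma one_lt_floorConst {q : ℝ} (hq : 0 < q) : 1 < floorConst q := by
  have := telescopeConst_pos hq
  unfold floorConst
  linarith

lemma spreadConst_pos (q : ℝ) : 0 < spreadConst q := sqrt_pos.2 (by positivity)

lemma sq_spreadConst (q : ℝ) : spreadConst q ^ 2 = floorConst q ^ 2 + 2 := sq_sqrt (by positivity)

lemma boundedVarConst_pos {q : ℝ} (hq : 1 < q) : 0 < boundedVarConst q := by
  have hC := telescopeConst_pos (zero_lt_one.trans hq)
  have hL := spreadConst_pos q
  have : 0 < q / (q - 1) := div_pos (by linarith) (by linarith)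
  unfold boundedVarConst smoothedConst
  positivity

namespace IsMartingaleDifference

variable {Ω : Type*} {mΩ : MeasurableSpace Ω} {μ : Measure Ω} [IsProbabilityMeasure μ]
  {ℱ : Filtration ℕ mΩ} {Y v : ℕ → Ω → ℝ} {p q ε : ℝ} {n : ℕ}

lemma abs_integral_smoothed_sub_stdNormalCDF_le (h : IsMartingaleDifference μ ℱ Y v)
    (hpq : p.HolderConjugate q) (hε : 0 < ε) (hε1 : ε ≤ 1)
    (hV : ∀ ω, partialSum v n ω ≤ 1 + ε ^ 2) (hYp : ∀ i, Integrable (fun ω => |Y i ω| ^ (2 * p)) μ)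
    (hmom : ∑ i ∈ range n, ∫ ω, |Y i ω| ^ (2 * p) ∂μ ≤ ε ^ (2 * p + 1)) (z : ℝ) :
    |∫ ω, Φ ((z - partialSum Y n ω)
        / √(1 + ε ^ 2 + (floorConst q * ε) ^ 2 - partialSum v n ω)) ∂μ - Φ z|
      ≤ smoothedConst q * ε + kolmogorovDist μ (partialSum Y n) / 4 := by
  set A := floorConst q with hAdef
  set D := kolmogorovDist μ (partialSum Y n)
  set c := 1 + ε ^ 2 + (A * ε) ^ 2
  have hq := hpq.symm.lt
  have hA : 1 < A := one_lt_floorConst hpq.symm.pos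
  have hC := telescopeConst_pos hpq.symm.pos
  have hεsq : ε ^ 2 ≤ ε := by nlinarith
  have hc : c - 1 ≤ (1 + A ^ 2) * ε := by
    calc c - 1 = (1 + A ^ 2) * ε ^ 2 := by ring
      _ ≤ (1 + A ^ 2) * ε := by gcongr
  have hscale : |Φ (z / √c) - Φ z| ≤ (1 + A ^ 2) * ε * spreadConst q :=
    (abs_stdNormalCDF_div_sqrt_sub_le (by simp only [c]; nlinarith [sq_nonneg (A * ε)])
      (spreadConst_pos q).le (by rw [sq_spreadConst]; nlinarith [sq_nonneg A]) z).trans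
      (mul_le_mul_of_nonneg_right hc (spreadConst_pos q).le)
  have hjumps : ε ^ (-(2 * p)) * ∑ i ∈ range n, ∫ ω, |Y i ω| ^ (2 * p) ∂μ ≤ ε := by
    calc _ ≤ ε ^ (-(2 * p)) * ε ^ (2 * p + 1) := by gcongr
      _ = ε := by rw [← rpow_add hε, neg_add_cancel_left, rpow_one]
  have hsmall := rpow_mul_integral_max_abs_rpow_neg_le (μ := μ) (h.measurable_partialSum n) hq hε
    hA.le z
  have htel := h.abs_integral_sub_stdNormalCDF_le (c := c) hpq hε
    (le_mul_of_one_le_left hε.le hA.le)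
    (fun ω => by simpa only [c, add_le_add_iff_right] using hV ω) hYp z
  have hfixpoint : telescopeConst q * (2 * D / A) ≤ D / 4 := by
    have hD : 0 ≤ D := kolmogorovDist_nonneg
    rw [← mul_div_assoc, div_le_iff₀ (by linarith), hAdef, floorConst]
    nlinarith
  have hsum := htel.trans (mul_le_mul_of_nonneg_left (add_le_add hjumps hsmall) hC.le)
  rw [smoothedConst]
  linarith [abs_sub_le (∫ ω, Φ ((z - partialSum Y n ω) / √(c - partialSum v n ω)) ∂μ)
    (Φ (z / √c)) (Φ z)]

lemma kolmogorovDist_le_of_partialSum_var_le (h : IsMartingaleDifference μ ℱ Y v)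
    (hpq : p.HolderConjugate q) (hε : 0 < ε) (hε1 : ε ≤ 1)
    (hV : ∀ ω, partialSum v n ω ≤ 1 + ε ^ 2) (hYp : ∀ i, Integrable (fun ω => |Y i ω| ^ (2 * p)) μ)
    (hmom : ∑ i ∈ range n, ∫ ω, |Y i ω| ^ (2 * p) ∂μ ≤ ε ^ (2 * p + 1))
    (hlow : μ.real {ω | partialSum v n ω < 1 - ε ^ 2} ≤ ε) :
    kolmogorovDist μ (partialSum Y n) ≤ boundedVarConst q * ε := by
  set c := 1 + ε ^ 2 + (floorConst q * ε) ^ 2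
  have hA : 0 < floorConst q := zero_lt_one.trans (one_lt_floorConst hpq.symm.pos)
  have hpos (ω : Ω) : 0 < c - partialSum v n ω := by
    have : 0 < (floorConst q * ε) ^ 2 := by positivity
    linarith [hV ω]
  have hspread : μ.real {ω | (spreadConst q * ε) ^ 2 < c - partialSum v n ω} ≤ ε := by
    refine (measureReal_mono fun ω (hω : (spreadConst q * ε) ^ 2 < _) => ?_).trans hlow
    rw [mul_pow, sq_spreadConst] at hω
    change partialSum v n ω < 1 - ε ^ 2
    linarith [show c = 1 + ε ^ 2 + floorConst q ^ 2 * ε ^ 2 by ring]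
  have hself : kolmogorovDist μ (partialSum Y n)
      ≤ (smoothedConst q * ε + kolmogorovDist μ (partialSum Y n) / 4) + ε
        + 6 * (spreadConst q * ε) + kolmogorovDist μ (partialSum Y n) / 8 := by
    refine kolmogorovDist_le fun z => (abs_measureReal_sub_stdNormalCDF_le_of_smoothed
      (h.measurable_partialSum n) ((h.measurable_partialSum_var n).const_sub c) hpos
      (mul_pos (spreadConst_pos q) hε)
      (h.abs_integral_smoothed_sub_stdNormalCDF_le hpq hε hε1 hV hYp hmom) z).trans ?_
    gcongr
  have hD : 0 ≤ kolmogorovDist μ (partialSum Y n) := kolmogorovDist_nonneg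
  unfold boundedVarConst
  linarith

end IsMartingaleDifference

end BoundedVariance

section Stopping

variable {Ω : Type*}

lemma measureReal_le_add_of_subset_union {mΩ : MeasurableSpace Ω} {μ : Measure Ω}
    [IsFiniteMeasure μ] {s t u : Set Ω} (h : s ⊆ t ∪ u) : μ.real s ≤ μ.real t + μ.real u :=
  (measureReal_mono h).trans (measureReal_union_le _ _)

lemma kolmogorovDist_le_add_measureReal {mΩ : MeasurableSpace Ω} {μ : Measure Ω}
    [IsProbabilityMeasure μ] {T T' : Ω → ℝ} {s : Set Ω} (h : ∀ ω ∉ s, T ω = T' ω) :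
    kolmogorovDist μ T ≤ kolmogorovDist μ T' + μ.real s := by
  refine kolmogorovDist_le fun z => ?_
  have hup : μ.real {ω | T ω ≤ z} ≤ μ.real {ω | T' ω ≤ z} + μ.real s :=
    measureReal_le_add_of_subset_union fun ω (hω : T ω ≤ z) =>
      or_iff_not_imp_right.2 fun hs => show T' ω ≤ z from h ω hs ▸ hω
  have hlow : μ.real {ω | T' ω ≤ z} ≤ μ.real {ω | T ω ≤ z} + μ.real s :=
    measureReal_le_add_of_subset_union fun ω (hω : T' ω ≤ z) =>
      or_iff_not_imp_right.2 fun hs => show T ω ≤ z from (h ω hs).symm ▸ hω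
  have hD := abs_le.1 (abs_measureReal_sub_stdNormalCDF_le (μ := μ) (T := T') z)
  rw [abs_le]
  constructor <;> linarith [hD.1, hD.2]

/-- The sequence `Y` stopped before the accumulated conditional variance `∑ v` exceeds `b`. Whether
the `i`-th term survives is decided by `v 0, …, v i`, hence predictably. -/
noncomputable def stopped (v : ℕ → Ω → ℝ) (b : ℝ) (Y : ℕ → Ω → ℝ) (i : ℕ) : Ω → ℝ :=
  {ω | partialSum v (i + 1) ω ≤ b}.indicator (Y i)

lemma partialSum_stopped_self_le {v : ℕ → Ω → ℝ} {b : ℝ} (hv : ∀ i ω, 0 ≤ v i ω) (hb : 0 ≤ b)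
    (n : ℕ) (ω : Ω) : partialSum (stopped v b v) n ω ≤ b := by
  have hle (k : ℕ) : partialSum (stopped v b v) k ω ≤ partialSum v k ω :=
    sum_le_sum fun i _ => Set.indicator_le_self' (fun _ _ => hv i _) ω
  induction n with
  | zero => simpa [partialSum] using hb
  | succ k ih =>
    by_cases hω : partialSum v (k + 1) ω ≤ b
    · exact (hle _).trans hω
    · rw [partialSum_succ]
      simpa [stopped, hω] using ih

namespace IsMartingaleDifference

variable {mΩ : MeasurableSpace Ω} {μ : Measure Ω} {ℱ : Filtration ℕ mΩ} {Y v : ℕ → Ω → ℝ}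

protected lemma stopped [IsFiniteMeasure μ] (h : IsMartingaleDifference μ ℱ Y v) (b : ℝ) :
    IsMartingaleDifference μ ℱ (stopped v b Y) (stopped v b v) := by
  have hs (i : ℕ) : MeasurableSet[ℱ i] {ω | partialSum v (i + 1) ω ≤ b} :=
    measurableSet_le (h.measurable_partialSum_var' i) measurable_const
  have hsq (i : ℕ) : (fun ω => stopped v b Y i ω ^ 2)
      = {ω | partialSum v (i + 1) ω ≤ b}.indicator fun ω => Y i ω ^ 2 := by
    ext ω
    by_cases hω : partialSum v (i + 1) ω ≤ b <;> simp [stopped, hω]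
  refine ⟨fun i => (h.measurable_diff' i).indicator (ℱ.mono i.le_succ _ (hs i)),
    fun i => (h.memLp_two i).indicator (ℱ.le i _ (hs i)), fun i => ?_,
    fun i => (h.measurable_var' i).indicator (hs i),
    fun i ω => Set.indicator_nonneg (fun _ _ => h.var_nonneg i _) ω, fun i => ?_⟩
  · filter_upwards [condExp_indicator ((h.memLp_two i).integrable one_le_two) (hs i),
      h.condExp_diff i] with ω hind h0
    rw [stopped, hind]
    simp [Set.indicator_apply, h0]
  · rw [hsq]
    filter_upwards [condExp_indicator (h.integrable_sq i) (hs i), h.condExp_sq i] with ω hind hv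
    rw [hind]
    simp [stopped, Set.indicator_apply, hv]

lemma partialSum_stopped_eq (h : IsMartingaleDifference μ ℱ Y v) {b : ℝ} {n : ℕ} {ω : Ω}
    (hω : partialSum v n ω ≤ b) (X : ℕ → Ω → ℝ) :
    partialSum (stopped v b X) n ω = partialSum X n ω :=
  sum_congr rfl fun i hi => Set.indicator_of_mem
    (s := {ω | partialSum v (i + 1) ω ≤ b})
    ((h.monotone_partialSum_var ω (Nat.succ_le_of_lt (mem_range.1 hi))).trans hω) _

lemma abs_stopped_rpow {r : ℝ} (hr : r ≠ 0) (v : ℕ → Ω → ℝ) (b : ℝ) (X : ℕ → Ω → ℝ) (i : ℕ) :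
    (fun ω => |stopped v b X i ω| ^ r)
      = {ω | partialSum v (i + 1) ω ≤ b}.indicator fun ω => |X i ω| ^ r := by
  ext ω
  by_cases hω : partialSum v (i + 1) ω ≤ b <;> simp [stopped, hω, hr]

lemma integrable_abs_stopped_rpow (h : IsMartingaleDifference μ ℱ Y v) {r : ℝ} (hr : r ≠ 0)
    (b : ℝ) {i : ℕ} (hY : Integrable (fun ω => |Y i ω| ^ r) μ) :
    Integrable (fun ω => |stopped v b Y i ω| ^ r) μ := by
  rw [abs_stopped_rpow hr]
  exact hY.indicator (measurableSet_le (h.measurable_partialSum_var _) measurable_const)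

lemma integral_abs_stopped_rpow_le (h : IsMartingaleDifference μ ℱ Y v) {r : ℝ} (hr : r ≠ 0)
    (b : ℝ) {i : ℕ} (hY : Integrable (fun ω => |Y i ω| ^ r) μ) :
    ∫ ω, |stopped v b Y i ω| ^ r ∂μ ≤ ∫ ω, |Y i ω| ^ r ∂μ := by
  refine integral_mono (h.integrable_abs_stopped_rpow hr b hY) hY ?_
  rw [abs_stopped_rpow hr]
  exact Set.indicator_le_self' fun ω _ => by positivity

lemma kolmogorovDist_le_of_moments_le [IsProbabilityMeasure μ] (h : IsMartingaleDifference μ ℱ Y v)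
    {p q ε : ℝ} {n : ℕ} (hpq : p.HolderConjugate q) (hε : 0 < ε) (hε1 : ε ≤ 1)
    (hYp : ∀ i, Integrable (fun ω => |Y i ω| ^ (2 * p)) μ)
    (hmom : ∑ i ∈ range n, ∫ ω, |Y i ω| ^ (2 * p) ∂μ ≤ ε ^ (2 * p + 1))
    (hvar : μ.real {ω | ε ^ 2 < |partialSum v n ω - 1|} ≤ ε) :
    kolmogorovDist μ (partialSum Y n) ≤ (boundedVarConst q + 1) * ε := by
  set b := 1 + ε ^ 2
  set Y' := stopped v b Y
  set v' := stopped v b v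
  have hp : 2 * p ≠ 0 := mul_ne_zero two_ne_zero hpq.ne_zero
  have hdev {ω : Ω} (hω : ω ∉ {ω | ε ^ 2 < |partialSum v n ω - 1|}) :
      |partialSum v n ω - 1| ≤ ε ^ 2 := not_lt.1 hω
  have hgood {ω : Ω} (hω : ω ∉ {ω | ε ^ 2 < |partialSum v n ω - 1|}) : partialSum v n ω ≤ b := by
    linarith [(abs_le.1 (hdev hω)).2]
  have hlow : μ.real {ω | partialSum v' n ω < 1 - ε ^ 2} ≤ ε := by
    refine (measureReal_mono fun ω (hω : partialSum v' n ω < _) => ?_).trans hvar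
    by_contra hbad
    rw [h.partialSum_stopped_eq (hgood hbad)] at hω
    linarith [(abs_le.1 (hdev hbad)).1]
  have hstopped : kolmogorovDist μ (partialSum Y' n) ≤ boundedVarConst q * ε :=
    (h.stopped b).kolmogorovDist_le_of_partialSum_var_le hpq hε hε1
      (partialSum_stopped_self_le h.var_nonneg (by positivity) n)
      (fun i => h.integrable_abs_stopped_rpow hp b (hYp i))
      ((sum_le_sum fun i _ => h.integral_abs_stopped_rpow_le hp b (hYp i)).trans hmom) hlow
  have hsame : kolmogorovDist μ (partialSum Y n) ≤ kolmogorovDist μ (partialSum Y' n)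
      + μ.real {ω | ε ^ 2 < |partialSum v n ω - 1|} :=
    kolmogorovDist_le_add_measureReal fun ω hω => (h.partialSum_stopped_eq (hgood hω) Y).symm
  linarith

end IsMartingaleDifference

end Stopping

section Compensator

variable {Ω : Type*} {mΩ : MeasurableSpace Ω} {μ : Measure Ω}

/-- The terms of `w` take values in `[0, C]` and `w i` is `ℱ (i + 1)`-measurable; `g i` is a version
of the conditional expectation of `w i` given `ℱ i` which takes values in `[0, C]` everywhere. -/
structure IsBoundedCompensator (μ : Measure Ω) (ℱ : Filtration ℕ mΩ) (C : ℝ) (w g : ℕ → Ω → ℝ) :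
    Prop where
  measurable_incr' : ∀ i, Measurable[ℱ (i + 1)] (w i)
  incr_nonneg : ∀ i ω, 0 ≤ w i ω
  incr_le : ∀ i ω, w i ω ≤ C
  measurable_comp' : ∀ i, Measurable[ℱ i] (g i)
  comp_nonneg : ∀ i ω, 0 ≤ g i ω
  comp_le : ∀ i ω, g i ω ≤ C
  condExp_incr : ∀ i, μ[w i | ℱ i] =ᵐ[μ] g i

lemma exists_isBoundedCompensator [IsFiniteMeasure μ] {ℱ : Filtration ℕ mΩ} {C : ℝ}
    {w : ℕ → Ω → ℝ} (hw : ∀ i, Measurable[ℱ (i + 1)] (w i)) (hw0 : ∀ i ω, 0 ≤ w i ω)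
    (hwC : ∀ i ω, w i ω ≤ C) : ∃ g, IsBoundedCompensator μ ℱ C w g := by
  have hint (i : ℕ) : Integrable (w i) μ :=
    integrable_of_abs_le ((hw i).mono (ℱ.le _) le_rfl) fun ω =>
      (abs_of_nonneg (hw0 i ω)).trans_le (hwC i ω)
  refine ⟨fun i ω => min (max ((μ[w i | ℱ i]) ω) 0) C, hw, hw0, hwC,
    fun i => (stronglyMeasurable_condExp.measurable.max measurable_const).min measurable_const,
    fun i ω => le_min (le_max_right _ _) ((hw0 i ω).trans (hwC i ω)),
    fun i ω => min_le_right _ _, fun i => ?_⟩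
  have hnonneg : ∀ᵐ ω ∂μ, 0 ≤ (μ[w i | ℱ i]) ω := condExp_nonneg (ae_of_all _ (hw0 i))
  have hle : μ[w i | ℱ i] ≤ᵐ[μ] fun _ => C :=
    (condExp_mono (hint i) (integrable_const C) (ae_of_all _ (hwC i))).trans_eq
      (condExp_const (ℱ.le i) C).eventuallyEq
  filter_upwards [hnonneg, hle] with ω h0 hC
  rw [max_eq_left h0, min_eq_left hC]

lemma partialSum_nonneg {Y : ℕ → Ω → ℝ} (hY : ∀ i ω, 0 ≤ Y i ω) (k : ℕ) (ω : Ω) :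
    0 ≤ partialSum Y k ω := sum_nonneg fun i _ => hY i ω

lemma partialSum_le_mul {Y : ℕ → Ω → ℝ} {C : ℝ} (hY : ∀ i ω, Y i ω ≤ C) (k : ℕ) (ω : Ω) :
    partialSum Y k ω ≤ k * C :=
  (sum_le_card_nsmul _ _ C fun i _ => hY i ω).trans_eq (by simp)

/-- The exponential `exp (s (W - G) / b - G)` of the compensated sum `W - G`, where `W` and `G` are
the `k`-th partial sums of `w` and `g`. The correction `-G` makes it a supermartingale. -/
noncomputable def compensatedExp (s b : ℝ) (w g : ℕ → Ω → ℝ) (k : ℕ) (ω : Ω) : ℝ :=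
  exp (s * (partialSum w k ω - partialSum g k ω) / b - partialSum g k ω)

lemma compensatedExp_succ (s b : ℝ) (w g : ℕ → Ω → ℝ) (k : ℕ) (ω : Ω) :
    compensatedExp s b w g (k + 1) ω =
      compensatedExp s b w g k ω * exp (-(s * g k ω / b + g k ω)) * exp (s * w k ω / b) := by
  simp only [compensatedExp, partialSum_succ, ← exp_add]
  ring_nf

lemma abs_mul_div_le_one {s b u : ℝ} (hs : |s| ≤ 1) (hb : 0 < b) (hb1 : b ≤ 1) (hu : 0 ≤ u)
    (hub : u ≤ b ^ 2) : |s * u / b| ≤ 1 := by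
  rw [abs_div, abs_mul, abs_of_nonneg hu, abs_of_pos hb, div_le_one hb]
  nlinarith

lemma exp_mul_div_le {s b u : ℝ} (hs : |s| ≤ 1) (hb : 0 < b) (hb1 : b ≤ 1) (hu : 0 ≤ u)
    (hub : u ≤ b ^ 2) : exp (s * u / b) ≤ 1 + (s / b + 1) * u := by
  have hsq : (s * u / b) ^ 2 ≤ u :=
    calc (s * u / b) ^ 2 = s ^ 2 * (u * u / b ^ 2) := by ring
      _ ≤ 1 * (u * b ^ 2 / b ^ 2) := by
          gcongr
          exact (sq_le_one_iff_abs_le_one s).2 hs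
      _ = u := by field_simp
  have hexp := (abs_le.1 (abs_exp_sub_one_sub_id_le (abs_mul_div_le_one hs hb hb1 hu hub))).2
  have hring : (s / b + 1) * u = s * u / b + u := by ring
  linarith

namespace IsBoundedCompensator

variable {ℱ : Filtration ℕ mΩ} {C s b : ℝ} {w g : ℕ → Ω → ℝ}

lemma measurable_incr (h : IsBoundedCompensator μ ℱ C w g) (i : ℕ) : Measurable (w i) :=
  (h.measurable_incr' i).mono (ℱ.le _) le_rfl

lemma measurable_comp (h : IsBoundedCompensator μ ℱ C w g) (i : ℕ) : Measurable (g i) :=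
  (h.measurable_comp' i).mono (ℱ.le _) le_rfl

lemma measurable_compensatedExp (h : IsBoundedCompensator μ ℱ C w g) (s b : ℝ) (k : ℕ) :
    Measurable[ℱ k] (compensatedExp s b w g k) := by
  have hw : Measurable[ℱ k] (partialSum w k) := measurable_partialSum_of_forall_lt fun i hi =>
    (h.measurable_incr' i).mono (ℱ.mono hi) le_rfl
  have hg : Measurable[ℱ k] (partialSum g k) := measurable_partialSum_of_forall_lt fun i hi =>
    (h.measurable_comp' i).mono (ℱ.mono hi.le) le_rfl
  exact measurable_exp.comp ((((hw.sub hg).const_mul s).div_const b).sub hg)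

lemma abs_compensatedExp_le (h : IsBoundedCompensator μ ℱ C w g) (hs : |s| ≤ 1) (hb : 0 < b)
    (k : ℕ) (ω : Ω) : |compensatedExp s b w g k ω| ≤ exp (k * C / b) := by
  have hg := partialSum_nonneg h.comp_nonneg k ω
  have hdiff : |partialSum w k ω - partialSum g k ω| ≤ k * C :=
    abs_sub_le_of_nonneg_of_le (partialSum_nonneg h.incr_nonneg k ω)
      (partialSum_le_mul h.incr_le k ω) hg (partialSum_le_mul h.comp_le k ω)
  have hsdiff : s * (partialSum w k ω - partialSum g k ω) ≤ k * C :=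
    calc s * (partialSum w k ω - partialSum g k ω)
        ≤ |s| * |partialSum w k ω - partialSum g k ω| := (le_abs_self _).trans_eq (abs_mul _ _)
      _ ≤ 1 * (k * C) := by gcongr
      _ = k * C := one_mul _
  rw [compensatedExp, abs_of_pos (exp_pos _), exp_le_exp]
  exact (sub_le_self _ hg).trans (by gcongr)

variable [IsFiniteMeasure μ]

lemma integrable_incr (h : IsBoundedCompensator μ ℱ C w g) (i : ℕ) : Integrable (w i) μ :=
  integrable_of_abs_le (h.measurable_incr i) fun ω =>
    (abs_of_nonneg (h.incr_nonneg i ω)).trans_le (h.incr_le i ω)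

lemma integrable_comp (h : IsBoundedCompensator μ ℱ C w g) (i : ℕ) : Integrable (g i) μ :=
  integrable_of_abs_le (h.measurable_comp i) fun ω =>
    (abs_of_nonneg (h.comp_nonneg i ω)).trans_le (h.comp_le i ω)

lemma integrable_compensatedExp (h : IsBoundedCompensator μ ℱ C w g) (hs : |s| ≤ 1) (hb : 0 < b)
    (k : ℕ) : Integrable (compensatedExp s b w g k) μ :=
  integrable_of_abs_le ((h.measurable_compensatedExp s b k).mono (ℱ.le k) le_rfl)
    (h.abs_compensatedExp_le hs hb k)

/- `exp u ≤ 1 + u + u ^ 2` bounds the left-hand side by the mean of `Z * (1 + (s / b + 1) * w k)`,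
where `Z` is known at time `k`, so `w k` may be replaced by `g k`; then `1 + u ≤ exp u` applies. -/
lemma integral_compensatedExp_succ_le (h : IsBoundedCompensator μ ℱ (b ^ 2) w g) (hs : |s| ≤ 1)
    (hb : 0 < b) (hb1 : b ≤ 1) (k : ℕ) :
    ∫ ω, compensatedExp s b w g (k + 1) ω ∂μ ≤ ∫ ω, compensatedExp s b w g k ω ∂μ := by
  set M := compensatedExp s b w g
  set Z : Ω → ℝ := fun ω => M k ω * exp (-(s * g k ω / b + g k ω))
  have hZm : Measurable[ℱ k] Z := (h.measurable_compensatedExp s b k).mul (measurable_exp.comp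
    ((((h.measurable_comp' k).const_mul s).div_const b).add (h.measurable_comp' k)).neg)
  have hZ0 (ω : Ω) : 0 ≤ Z ω := mul_nonneg (exp_pos _).le (exp_pos _).le
  have hZb (ω : Ω) : |Z ω| ≤ exp (k * b ^ 2 / b) * exp 1 := by
    rw [abs_mul, abs_of_pos (exp_pos (-(s * g k ω / b + g k ω)))]
    gcongr
    · exact h.abs_compensatedExp_le hs hb k ω
    · have := (abs_le.1 (abs_mul_div_le_one hs hb hb1 (h.comp_nonneg k ω) (h.comp_le k ω))).1
      linarith [h.comp_nonneg k ω]
  have hZi : Integrable Z μ := integrable_of_abs_le (hZm.mono (ℱ.le k) le_rfl) hZb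
  have hZw := integrable_mul_of_abs_le (hZm.mono (ℱ.le k) le_rfl) hZb (h.integrable_incr k)
  have hZg := integrable_mul_of_abs_le (hZm.mono (ℱ.le k) le_rfl) hZb (h.integrable_comp k)
  have hup (ω : Ω) : M (k + 1) ω ≤ Z ω + (s / b + 1) * (Z ω * w k ω) :=
    calc M (k + 1) ω = Z ω * exp (s * w k ω / b) := compensatedExp_succ s b w g k ω
      _ ≤ Z ω * (1 + (s / b + 1) * w k ω) := mul_le_mul_of_nonneg_left
          (exp_mul_div_le hs hb hb1 (h.incr_nonneg k ω) (h.incr_le k ω)) (hZ0 ω)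
      _ = Z ω + (s / b + 1) * (Z ω * w k ω) := by ring
  have hlow (ω : Ω) : Z ω + (s / b + 1) * (Z ω * g k ω) ≤ M k ω :=
    calc Z ω + (s / b + 1) * (Z ω * g k ω) = Z ω * (s * g k ω / b + g k ω + 1) := by ring
      _ ≤ Z ω * exp (s * g k ω / b + g k ω) :=
          mul_le_mul_of_nonneg_left (add_one_le_exp _) (hZ0 ω)
      _ = M k ω := by rw [mul_assoc, ← exp_add, neg_add_cancel, exp_zero, mul_one]
  calc ∫ ω, M (k + 1) ω ∂μ ≤ ∫ ω, (Z ω + (s / b + 1) * (Z ω * w k ω)) ∂μ :=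
        integral_mono (h.integrable_compensatedExp hs hb _) (hZi.add (hZw.const_mul _)) hup
    _ = ∫ ω, (Z ω + (s / b + 1) * (Z ω * g k ω)) ∂μ := by
        rw [integral_add hZi (hZw.const_mul _), integral_add hZi (hZg.const_mul _),
          integral_const_mul, integral_const_mul, integral_mul_eq_of_condExp_eq (ℱ.le k) hZm
            (h.integrable_incr k) hZw (h.condExp_incr k)]
    _ ≤ ∫ ω, M k ω ∂μ :=
        integral_mono (hZi.add (hZg.const_mul _)) (h.integrable_compensatedExp hs hb _) hlow

end IsBoundedCompensator

lemma measureReal_le_exp_neg_of_integral_exp_le_one {f : Ω → ℝ}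
    (hf : Integrable (fun ω => exp (f ω)) μ) (hf1 : ∫ ω, exp (f ω) ∂μ ≤ 1) (t : ℝ) :
    μ.real {ω | t ≤ f ω} ≤ exp (-t) := by
  have hmarkov := mul_meas_ge_le_integral_of_nonneg (ae_of_all _ fun ω => (exp_pos (f ω)).le) hf
    (exp t)
  simp only [exp_le_exp] at hmarkov
  rw [exp_neg, ← one_div, le_div_iff₀ (exp_pos t), mul_comm]
  exact hmarkov.trans hf1

namespace IsBoundedCompensator

variable [IsProbabilityMeasure μ] {ℱ : Filtration ℕ mΩ} {s b : ℝ} {w g : ℕ → Ω → ℝ}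

lemma measureReal_le_exp_neg (h : IsBoundedCompensator μ ℱ (b ^ 2) w g) (hs : |s| ≤ 1)
    (hb : 0 < b) (hb1 : b ≤ 1) (k : ℕ) (t : ℝ) :
    μ.real {ω | t ≤ s * (partialSum w k ω - partialSum g k ω) / b - partialSum g k ω} ≤
      exp (-t) := by
  have hmean : ∫ ω, compensatedExp s b w g k ω ∂μ ≤ 1 := by
    induction k with
    | zero => simp [compensatedExp, partialSum]
    | succ k ih => exact (h.integral_compensatedExp_succ_le hs hb hb1 k).trans ih
  exact measureReal_le_exp_neg_of_integral_exp_le_one (h.integrable_compensatedExp hs hb k) hmean t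

lemma measureReal_comp_le_and_le_abs_sub_le (h : IsBoundedCompensator μ ℱ (b ^ 2) w g)
    (hb : 0 < b) (hb1 : b ≤ 1) (k : ℕ) (a t : ℝ) :
    μ.real {ω | partialSum g k ω ≤ a ∧ t ≤ |partialSum w k ω - partialSum g k ω|} ≤
      2 * exp (a - t / b) := by
  have hup := h.measureReal_le_exp_neg (s := 1) (by simp) hb hb1 k (t / b - a)
  have hlow := h.measureReal_le_exp_neg (s := -1) (by simp) hb hb1 k (t / b - a)
  rw [neg_sub] at hup hlow
  rw [two_mul]
  refine (measureReal_le_add_of_subset_union ?_).trans (add_le_add hup hlow)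
  rintro ω ⟨hG, ht⟩
  refine (le_abs.1 ht).imp (fun h => ?_) fun h => ?_
  · exact sub_le_sub (by rw [one_mul]; gcongr) hG
  · exact sub_le_sub (by rw [neg_one_mul]; gcongr) hG

end IsBoundedCompensator

end Compensator

section QuadraticVariation

variable {Ω : Type*} {mΩ : MeasurableSpace Ω} {μ : Measure Ω}

lemma measureReal_lt_le_integral_div [IsFiniteMeasure μ] {f : Ω → ℝ} (h0 : ∀ ω, 0 ≤ f ω)
    (hf : Integrable f μ) {t : ℝ} (ht : 0 < t) : μ.real {ω | t < f ω} ≤ (∫ ω, f ω ∂μ) / t := by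
  have hsub : {ω | t < f ω} ⊆ {ω | t ≤ f ω} := fun ω (hω : t < f ω) => hω.le
  rw [le_div_iff₀' ht]
  exact (mul_le_mul_of_nonneg_left (measureReal_mono hsub) ht.le).trans
    (mul_meas_ge_le_integral_of_nonneg (ae_of_all _ h0) hf t)

/-- The constant in `exp (-ε ^ (-β)) ≤ C * ε` for `0 < ε ≤ 1`. -/
noncomputable def expDecayConst (β : ℝ) : ℝ := ⌈1 / β⌉₊.factorial

lemma expDecayConst_pos (β : ℝ) : 0 < expDecayConst β := Nat.cast_pos.2 (Nat.factorial_pos _)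

lemma exp_neg_rpow_neg_le {β ε : ℝ} (hβ : 0 < β) (hε : 0 < ε) (hε1 : ε ≤ 1) :
    exp (-ε ^ (-β)) ≤ expDecayConst β * ε := by
  set k := ⌈1 / β⌉₊
  have hk : 1 ≤ k * β := (div_le_iff₀ hβ).1 (Nat.le_ceil _)
  have hinv : ε⁻¹ ≤ (ε ^ (-β)) ^ k := by
    rw [← rpow_natCast, ← rpow_mul hε.le, ← rpow_neg_one]
    exact rpow_le_rpow_of_exponent_ge hε hε1 (by linarith)
  have hexp : (ε ^ (-β)) ^ k ≤ expDecayConst β * exp (ε ^ (-β)) :=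
    (div_le_iff₀' (expDecayConst_pos β)).1 (pow_div_factorial_le_exp _ (by positivity) k)
  rw [exp_neg, inv_le_iff_one_le_mul₀ (exp_pos _)]
  calc 1 = ε⁻¹ * ε := (inv_mul_cancel₀ hε.ne').symm
    _ ≤ expDecayConst β * exp (ε ^ (-β)) * ε := by gcongr; exact hinv.trans hexp
    _ = expDecayConst β * ε * exp (ε ^ (-β)) := by ring

lemma IsBoundedCompensator.measureReal_comp_le_and_le_abs_sub_le_mul [IsProbabilityMeasure μ]
    {ℱ : Filtration ℕ mΩ} {q ε : ℝ} {w g : ℕ → Ω → ℝ}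
    (h : IsBoundedCompensator μ ℱ ((ε ^ ((1 + q) / 2)) ^ 2) w g) (hq : 1 < q) (hε : 0 < ε)
    (hε1 : ε ≤ 1) (k : ℕ) (a : ℝ) :
    μ.real {ω | partialSum g k ω ≤ a ∧ ε ≤ |partialSum w k ω - partialSum g k ω|} ≤
      2 * exp a * (expDecayConst ((q - 1) / 2) * ε) := by
  have hratio : ε / ε ^ ((1 + q) / 2) = ε ^ (-((q - 1) / 2)) := by
    rw [← rpow_one_sub' hε.le (by linarith)]
    ring_nf
  refine (h.measureReal_comp_le_and_le_abs_sub_le (by positivity)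
    (rpow_le_one hε.le hε1 (by linarith)) k a ε).trans ?_
  rw [sub_eq_add_neg, exp_add, ← mul_assoc, hratio]
  gcongr
  exact exp_neg_rpow_neg_le (by linarith) hε hε1

/-- The square of `Y i` where `|Y i| ≤ b`, and `0` elsewhere. -/
noncomputable def smallSq (b : ℝ) (Y : ℕ → Ω → ℝ) (i : ℕ) : Ω → ℝ :=
  {ω | |Y i ω| ≤ b}.indicator fun ω => Y i ω ^ 2

lemma smallSq_nonneg (b : ℝ) (Y : ℕ → Ω → ℝ) (i : ℕ) (ω : Ω) : 0 ≤ smallSq b Y i ω :=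
  Set.indicator_nonneg (fun _ _ => sq_nonneg _) ω

lemma smallSq_le_sq (b : ℝ) (Y : ℕ → Ω → ℝ) (i : ℕ) (ω : Ω) : smallSq b Y i ω ≤ Y i ω ^ 2 :=
  Set.indicator_le_self' (fun _ _ => sq_nonneg _) ω

lemma smallSq_le (b : ℝ) (Y : ℕ → Ω → ℝ) (i : ℕ) (ω : Ω) : smallSq b Y i ω ≤ b ^ 2 :=
  Set.indicator_apply_le' (fun hω => sq_le_sq' (abs_le.1 hω).1 (abs_le.1 hω).2)
    fun _ => sq_nonneg b

lemma sq_sub_smallSq_le {p b : ℝ} (hp : 1 ≤ p) (hb : 0 < b) (Y : ℕ → Ω → ℝ) (i : ℕ) (ω : Ω) :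
    Y i ω ^ 2 - smallSq b Y i ω ≤ b ^ (2 - 2 * p) * |Y i ω| ^ (2 * p) := by
  by_cases hω : |Y i ω| ≤ b
  · have hsmall : smallSq b Y i ω = Y i ω ^ 2 := by simp [smallSq, hω]
    rw [hsmall, sub_self]
    positivity
  · have hbY : b < |Y i ω| := not_le.1 hω
    have hY : 0 < |Y i ω| := hb.trans hbY
    have hlarge : smallSq b Y i ω = 0 := by simp [smallSq, hω]
    rw [hlarge, sub_zero]
    calc Y i ω ^ 2 = |Y i ω| ^ (2 - 2 * p) * |Y i ω| ^ (2 * p) := by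
          rw [← rpow_add hY, sub_add_cancel, rpow_two, sq_abs]
      _ ≤ b ^ (2 - 2 * p) * |Y i ω| ^ (2 * p) := by
          gcongr ?_ * _
          exact rpow_le_rpow_of_nonpos hb hbY.le (by linarith)

/-- The constant in the bound on the probability that quadratic variation and conditional variance
are far apart. -/
noncomputable def quadVarConst (q : ℝ) : ℝ := 3 + 2 * exp 3 * expDecayConst ((q - 1) / 2)

lemma quadVarConst_pos (q : ℝ) : 0 < quadVarConst q := by
  have := expDecayConst_pos ((q - 1) / 2)
  unfold quadVarConst
  positivity

namespace IsMartingaleDifference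

variable {ℱ : Filtration ℕ mΩ} {Y v g : ℕ → Ω → ℝ} {p q b ε : ℝ} {n : ℕ}

lemma measurable_smallSq' (h : IsMartingaleDifference μ ℱ Y v) (b : ℝ) (i : ℕ) :
    Measurable[ℱ (i + 1)] (smallSq b Y i) :=
  ((h.measurable_diff' i).pow_const 2).indicator
    (measurableSet_le (measurable_norm.comp (h.measurable_diff' i)) measurable_const)

lemma integral_abs_var_sub_comp_le [IsFiniteMeasure μ] (h : IsMartingaleDifference μ ℱ Y v)
    {C : ℝ} (hg : IsBoundedCompensator μ ℱ C (smallSq b Y) g) (i : ℕ) :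
    ∫ ω, |v i ω - g i ω| ∂μ ≤ ∫ ω, (Y i ω ^ 2 - smallSq b Y i ω) ∂μ := by
  have hle : g i ≤ᵐ[μ] v i := (hg.condExp_incr i).symm.le.trans <|
    (condExp_mono (hg.integrable_incr i) (h.integrable_sq i)
      (ae_of_all _ (smallSq_le_sq b Y i))).trans (h.condExp_sq i).le
  have habs : (fun ω => |v i ω - g i ω|) =ᵐ[μ] fun ω => v i ω - g i ω := by
    filter_upwards [hle] with ω hω using abs_of_nonneg (sub_nonneg.2 hω)
  rw [integral_congr_ae habs, integral_sub (h.integrable_var i) (hg.integrable_comp i),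
    integral_sub (h.integrable_sq i) (hg.integrable_incr i),
    ← integral_congr_ae (h.condExp_sq i), ← integral_congr_ae (hg.condExp_incr i),
    integral_condExp, integral_condExp]

lemma sum_integral_sq_sub_smallSq_le (hpq : p.HolderConjugate q) (hε : 0 < ε)
    [IsFiniteMeasure μ] (h : IsMartingaleDifference μ ℱ Y v)
    (hg : IsBoundedCompensator μ ℱ b (smallSq (ε ^ ((1 + q) / 2)) Y) g)
    (hYp : ∀ i, Integrable (fun ω => |Y i ω| ^ (2 * p)) μ)
    (hmom : ∑ i ∈ range n, ∫ ω, |Y i ω| ^ (2 * p) ∂μ ≤ ε ^ (2 * p + 1)) :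
    ∑ i ∈ range n, ∫ ω, (Y i ω ^ 2 - smallSq (ε ^ ((1 + q) / 2)) Y i ω) ∂μ ≤ ε ^ 2 := by
  have hterm (i : ℕ) : ∫ ω, (Y i ω ^ 2 - smallSq (ε ^ ((1 + q) / 2)) Y i ω) ∂μ ≤
      (ε ^ ((1 + q) / 2)) ^ (2 - 2 * p) * ∫ ω, |Y i ω| ^ (2 * p) ∂μ := by
    rw [← integral_const_mul]
    exact integral_mono ((h.integrable_sq i).sub (hg.integrable_incr i)) ((hYp i).const_mul _)
      (sq_sub_smallSq_le hpq.lt.le (by positivity) Y i)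
  have hexponent : (1 + q) / 2 * (2 - 2 * p) + (2 * p + 1) = 2 := by
    linarith [hpq.sub_one_mul_conj]
  calc ∑ i ∈ range n, ∫ ω, (Y i ω ^ 2 - smallSq (ε ^ ((1 + q) / 2)) Y i ω) ∂μ
      ≤ (ε ^ ((1 + q) / 2)) ^ (2 - 2 * p) * ∑ i ∈ range n, ∫ ω, |Y i ω| ^ (2 * p) ∂μ :=
        (sum_le_sum fun i _ => hterm i).trans_eq (mul_sum _ _ _).symm
    _ ≤ (ε ^ ((1 + q) / 2)) ^ (2 - 2 * p) * ε ^ (2 * p + 1) := by gcongr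
    _ = ε ^ 2 := by rw [← rpow_mul hε.le, ← rpow_add hε, hexponent, rpow_two]

end IsMartingaleDifference

lemma measureReal_lt_sum_le [IsFiniteMeasure μ] {f : ℕ → Ω → ℝ} {n : ℕ} {ε : ℝ} (hε : 0 < ε)
    (hf0 : ∀ i ω, 0 ≤ f i ω) (hf : ∀ i, Integrable (f i) μ)
    (hsum : ∑ i ∈ range n, ∫ ω, f i ω ∂μ ≤ ε ^ 2) :
    μ.real {ω | ε < ∑ i ∈ range n, f i ω} ≤ ε := by
  refine (measureReal_lt_le_integral_div (fun ω => sum_nonneg fun i _ => hf0 i ω)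
    (integrable_finsetSum _ fun i _ => hf i) hε).trans ?_
  rw [integral_finsetSum _ fun i _ => hf i, div_le_iff₀ hε, ← sq]
  exact hsum

lemma partialSum_sub (Y Z : ℕ → Ω → ℝ) (k : ℕ) (ω : Ω) :
    partialSum Y k ω - partialSum Z k ω = ∑ i ∈ range k, (Y i ω - Z i ω) :=
  (sum_sub_distrib _ _).symm

lemma abs_partialSum_sq_sub_le {Y v g : ℕ → Ω → ℝ} {b ε : ℝ} {n : ℕ} {ω : Ω} (hε : ε ≤ 1)
    (hV : partialSum v n ω ≤ 2)
    (hQW : ∑ i ∈ range n, (Y i ω ^ 2 - smallSq b Y i ω) ≤ ε)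
    (hVG : ∑ i ∈ range n, |v i ω - g i ω| ≤ ε)
    (hWG : partialSum g n ω ≤ 3 → |partialSum (smallSq b Y) n ω - partialSum g n ω| < ε) :
    |partialSum (fun i ω => Y i ω ^ 2) n ω - partialSum v n ω| ≤ 3 * ε := by
  have hQW0 : 0 ≤ ∑ i ∈ range n, (Y i ω ^ 2 - smallSq b Y i ω) :=
    sum_nonneg fun i _ => sub_nonneg.2 (smallSq_le_sq b Y i ω)
  rw [← partialSum_sub (fun i ω => Y i ω ^ 2)] at hQW hQW0
  have hVG' : |partialSum v n ω - partialSum g n ω| ≤ ε := by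
    rw [partialSum_sub]
    exact (abs_sum_le_sum_abs _ _).trans hVG
  obtain ⟨hVG1, hVG2⟩ := abs_le.1 hVG'
  obtain ⟨hWG1, hWG2⟩ := abs_lt.1 (hWG (by linarith))
  rw [abs_le]
  constructor <;> linarith

lemma IsMartingaleDifference.measureReal_sq_sub_var_le [IsProbabilityMeasure μ]
    {ℱ : Filtration ℕ mΩ} {Y v : ℕ → Ω → ℝ} {p q ε : ℝ} {n : ℕ}
    (h : IsMartingaleDifference μ ℱ Y v) (hpq : p.HolderConjugate q) (hε : 0 < ε) (hε1 : ε ≤ 1)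
    (hYp : ∀ i, Integrable (fun ω => |Y i ω| ^ (2 * p)) μ)
    (hmom : ∑ i ∈ range n, ∫ ω, |Y i ω| ^ (2 * p) ∂μ ≤ ε ^ (2 * p + 1))
    (hvar : μ.real {ω | ε ^ 2 < |partialSum v n ω - 1|} ≤ ε) :
    μ.real {ω | 3 * ε < |partialSum (fun i ω => Y i ω ^ 2) n ω - partialSum v n ω|} ≤
      quadVarConst q * ε := by
  set b := ε ^ ((1 + q) / 2)
  obtain ⟨g, hg⟩ : ∃ g, IsBoundedCompensator μ ℱ (b ^ 2) (smallSq b Y) g :=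
    exists_isBoundedCompensator (h.measurable_smallSq' b) (smallSq_nonneg b Y) (smallSq_le b Y)
  have hsum := h.sum_integral_sq_sub_smallSq_le hpq hε hg hYp hmom
  set badQW := {ω | ε < ∑ i ∈ range n, (Y i ω ^ 2 - smallSq b Y i ω)}
  have hQW : μ.real badQW ≤ ε :=
    measureReal_lt_sum_le hε (fun i ω => sub_nonneg.2 (smallSq_le_sq b Y i ω))
      (fun i => (h.integrable_sq i).sub (hg.integrable_incr i)) hsum
  set badVG := {ω | ε < ∑ i ∈ range n, |v i ω - g i ω|}
  have hVG : μ.real badVG ≤ ε := measureReal_lt_sum_le hε (fun i ω => abs_nonneg _)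
    (fun i => ((h.integrable_var i).sub (hg.integrable_comp i)).abs)
    ((sum_le_sum fun i _ => h.integral_abs_var_sub_comp_le hg i).trans hsum)
  set badWG := {ω | partialSum g n ω ≤ 3 ∧
    ε ≤ |partialSum (smallSq b Y) n ω - partialSum g n ω|}
  have hWG : μ.real badWG ≤ 2 * exp 3 * (expDecayConst ((q - 1) / 2) * ε) :=
    hg.measureReal_comp_le_and_le_abs_sub_le_mul hpq.symm.lt hε hε1 n 3
  have hsub : {ω | 3 * ε < |partialSum (fun i ω => Y i ω ^ 2) n ω - partialSum v n ω|} ⊆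
      ({ω | ε ^ 2 < |partialSum v n ω - 1|} ∪ badQW) ∪ (badVG ∪ badWG) := by
    intro ω hω
    by_contra hgood
    simp only [badQW, badVG, badWG, Set.mem_union, Set.mem_ofPred_eq, not_or, not_lt, not_and,
      not_le] at hgood
    obtain ⟨⟨hV, hQW⟩, hVG, hWG⟩ := hgood
    have hV2 : partialSum v n ω ≤ 2 := by
      linarith [(abs_le.1 hV).2, pow_le_one₀ (n := 2) hε.le hε1]
    exact (abs_partialSum_sq_sub_le hε1 hV2 hQW hVG hWG).not_gt hω
  have hunion := (measureReal_le_add_of_subset_union hsub).trans <| add_le_add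
    (measureReal_union_le (μ := μ) {ω | ε ^ 2 < |partialSum v n ω - 1|} badQW)
    (measureReal_union_le (μ := μ) badVG badWG)
  rw [quadVarConst]
  linarith

end QuadraticVariation

section Normalization

variable {Ω : Type*} {mΩ : MeasurableSpace Ω} {μ : Measure Ω} [IsProbabilityMeasure μ]

lemma abs_sqrt_sub_one_le (w : ℝ) : |√w - 1| ≤ |w - 1| := by
  rcases le_total 0 w with hw | hw
  · have hfactor : w - 1 = (√w - 1) * (√w + 1) := by linarith [mul_self_sqrt hw]
    rw [hfactor, abs_mul, abs_of_pos (by positivity : 0 < √w + 1)]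
    exact le_mul_of_one_le_right (abs_nonneg _) (by linarith [sqrt_nonneg w])
  · rw [sqrt_eq_zero_of_nonpos hw, zero_sub, abs_neg, abs_one, abs_of_neg (by linarith)]
    linarith

lemma exists_mul_le_mul_le_mul (x δ : ℝ) : ∃ a b : ℝ, |a - 1| = |δ| ∧ |b - 1| = |δ| ∧
    ∀ r, |r - 1| ≤ δ → x * a ≤ x * r ∧ x * r ≤ x * b := by
  have hlow : |(1 - δ) - 1| = |δ| := by rw [sub_sub_cancel_left, abs_neg]
  have hup : |(1 + δ) - 1| = |δ| := by rw [add_sub_cancel_left]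
  rcases le_total 0 x with hx | hx
  · refine ⟨1 - δ, 1 + δ, hlow, hup, fun r hr => ?_⟩
    obtain ⟨hr1, hr2⟩ := abs_le.1 hr
    exact ⟨mul_le_mul_of_nonneg_left (by linarith) hx, mul_le_mul_of_nonneg_left (by linarith) hx⟩
  · refine ⟨1 + δ, 1 - δ, hup, hlow, fun r hr => ?_⟩
    obtain ⟨hr1, hr2⟩ := abs_le.1 hr
    exact ⟨mul_le_mul_of_nonpos_left (by linarith) hx, mul_le_mul_of_nonpos_left (by linarith) hx⟩

lemma abs_measureReal_le_mul_sub_stdNormalCDF_le {T R : Ω → ℝ} {δ : ℝ} (hδ0 : 0 ≤ δ)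
    (hδ : δ ≤ 1 / 2) (x : ℝ) :
    |μ.real {ω | T ω ≤ x * R ω} - Φ x| ≤
      kolmogorovDist μ T + μ.real {ω | δ < |R ω - 1|} + 2 * δ := by
  obtain ⟨a, b, ha, hb, hab⟩ := exists_mul_le_mul_le_mul x δ
  have hscale {s : ℝ} (hs : |s - 1| = |δ|) : |Φ (x * s) - Φ x| ≤ 2 * δ := by
    rw [abs_of_nonneg hδ0] at hs
    have hs_half : 1 / 2 ≤ s := by linarith [(abs_le.1 hs.le).1]
    refine (abs_stdNormalCDF_mul_sub_le one_half_pos (by norm_num) hs_half).trans_eq ?_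
    rw [hs]
    ring
  have hbound {ω : Ω} (hω : ω ∉ {ω | δ < |R ω - 1|}) : x * a ≤ x * R ω ∧ x * R ω ≤ x * b :=
    hab _ (not_lt.1 hω : |R ω - 1| ≤ δ)
  have hup : μ.real {ω | T ω ≤ x * R ω} ≤
      μ.real {ω | T ω ≤ x * b} + μ.real {ω | δ < |R ω - 1|} :=
    measureReal_le_add_of_subset_union fun ω (hω : T ω ≤ x * R ω) =>
      or_iff_not_imp_right.2 fun hgood => hω.trans (hbound hgood).2
  have hlow : μ.real {ω | T ω ≤ x * a} ≤
      μ.real {ω | T ω ≤ x * R ω} + μ.real {ω | δ < |R ω - 1|} :=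
    measureReal_le_add_of_subset_union fun ω (hω : T ω ≤ x * a) =>
      or_iff_not_imp_right.2 fun hgood => hω.trans (hbound hgood).1
  have hDa := abs_le.1 (abs_measureReal_sub_stdNormalCDF_le (μ := μ) (T := T) (x * a))
  have hDb := abs_le.1 (abs_measureReal_sub_stdNormalCDF_le (μ := μ) (T := T) (x * b))
  rw [abs_le]
  constructor
  · linarith [(abs_le.1 (hscale ha)).1]
  · linarith [(abs_le.1 (hscale hb)).2]

lemma abs_sqrt_interpolation_sub_one_le {V Q ε t₁ t₂ : ℝ} (hε : 0 ≤ ε) (hε1 : ε ≤ 1)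
    (ht₁ : 0 ≤ t₁) (ht₂ : 0 ≤ t₂) (ht : t₁ + t₂ ≤ 1) (hV : |V - 1| ≤ ε ^ 2)
    (hQ : |Q - V| ≤ 3 * ε) : |√(t₁ * V + t₂ * Q + (1 - t₁ - t₂)) - 1| ≤ 4 * ε :=
  calc |√(t₁ * V + t₂ * Q + (1 - t₁ - t₂)) - 1|
      ≤ |t₁ * V + t₂ * Q + (1 - t₁ - t₂) - 1| := abs_sqrt_sub_one_le _
    _ = |(t₁ + t₂) * (V - 1) + t₂ * (Q - V)| := by ring_nf
    _ ≤ (t₁ + t₂) * |V - 1| + t₂ * |Q - V| := by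
        refine (abs_add_le _ _).trans_eq ?_
        rw [abs_mul, abs_mul, abs_of_nonneg (add_nonneg ht₁ ht₂), abs_of_nonneg ht₂]
    _ ≤ 1 * ε ^ 2 + 1 * (3 * ε) := by
        gcongr
        linarith
    _ ≤ 4 * ε := by nlinarith

/-- The constant in the normal approximation of the normalized martingale; `q` is the exponent
conjugate to `p`. -/
noncomputable def berryEsseenConst (q : ℝ) : ℝ := boundedVarConst q + quadVarConst q + 10

lemma berryEsseenConst_pos {q : ℝ} (hq : 1 < q) : 0 < berryEsseenConst q := by
  have := boundedVarConst_pos hq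
  have := quadVarConst_pos q
  unfold berryEsseenConst
  positivity

lemma IsMartingaleDifference.abs_measureReal_normalized_sub_stdNormalCDF_le
    {ℱ : Filtration ℕ mΩ} {Y v : ℕ → Ω → ℝ} {p q ε t₁ t₂ : ℝ} {n : ℕ}
    (h : IsMartingaleDifference μ ℱ Y v) (hpq : p.HolderConjugate q) (hε : 0 < ε)
    (hYp : ∀ i, Integrable (fun ω => |Y i ω| ^ (2 * p)) μ)
    (hmom : ∑ i ∈ range n, ∫ ω, |Y i ω| ^ (2 * p) ∂μ ≤ ε ^ (2 * p + 1))
    (hvar : μ.real {ω | ε ^ 2 < |partialSum v n ω - 1|} ≤ ε)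
    (ht₁ : 0 ≤ t₁) (ht₂ : 0 ≤ t₂) (ht : t₁ + t₂ ≤ 1) (x : ℝ) :
    |μ.real {ω | partialSum Y n ω ≤ x * √(t₁ * partialSum v n ω +
      t₂ * partialSum (fun i ω => Y i ω ^ 2) n ω + (1 - t₁ - t₂))} - Φ x| ≤
      berryEsseenConst q * ε := by
  have hB := boundedVarConst_pos hpq.symm.lt
  have hQ := quadVarConst_pos q
  rcases lt_or_ge (1 / 2) (4 * ε) with hlarge | hsmall
  · refine (abs_measureReal_sub_stdNormalCDF_le_one _ x).trans ?_
    rw [berryEsseenConst]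
    nlinarith [mul_pos hB hε, mul_pos hQ hε]
  have hε1 : ε ≤ 1 := by linarith
  set R : Ω → ℝ := fun ω => √(t₁ * partialSum v n ω +
    t₂ * partialSum (fun i ω => Y i ω ^ 2) n ω + (1 - t₁ - t₂))
  have hR : μ.real {ω | 4 * ε < |R ω - 1|} ≤ ε + quadVarConst q * ε := by
    refine (measureReal_le_add_of_subset_union fun ω (hω : 4 * ε < |R ω - 1|) => ?_).trans
      (add_le_add hvar (h.measureReal_sq_sub_var_le hpq hε hε1 hYp hmom hvar))
    by_contra hgood
    simp only [Set.mem_union, Set.mem_ofPred_eq, not_or, not_lt] at hgood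
    exact (abs_sqrt_interpolation_sub_one_le hε.le hε1 ht₁ ht₂ ht hgood.1 hgood.2).not_gt hω
  have hD := h.kolmogorovDist_le_of_moments_le hpq hε hε1 hYp hmom hvar
  have hclose := abs_measureReal_le_mul_sub_stdNormalCDF_le (μ := μ) (T := partialSum Y n) (R := R)
    (by positivity) hsmall x
  rw [berryEsseenConst]
  linarith

end Normalization

section ConditionalVariance

variable {Ω : Type*} {mΩ : MeasurableSpace Ω} {μ : Measure Ω} {ℱ : Filtration ℕ mΩ}
  {Y : ℕ → Ω → ℝ} {p : ℝ}

lemma le_mul_rpow_of_forall_pos {D C N a : ℝ} (ha : 0 < a) (hC : 0 < C) (hN : 0 ≤ N)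
    (h : ∀ ε > 0, N ≤ ε ^ a → D ≤ C * ε) : D ≤ C * N ^ (1 / a) := by
  rw [← div_le_iff₀' hC]
  refine le_of_forall_gt_imp_ge_of_dense fun ε hε => (div_le_iff₀' hC).2 ?_
  have hε0 : 0 < ε := (rpow_nonneg hN _).trans_lt hε
  refine h ε hε0 ?_
  rw [one_div, rpow_inv_lt_iff_of_pos hN hε0.le ha] at hε
  exact hε.le

lemma memLp_of_integrable_abs_rpow {f : Ω → ℝ} (hp : 0 < p) (hf : AEStronglyMeasurable f μ)
    (h : Integrable (fun ω => |f ω| ^ p) μ) : MemLp f (ENNReal.ofReal p) μ := by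
  rw [← integrable_norm_rpow_iff hf (by simpa using hp) ENNReal.ofReal_ne_top,
    ENNReal.toReal_ofReal hp.le]
  exact h

lemma memLp_sq_of_integrable_abs_rpow {f : Ω → ℝ} (hp : 0 < p) (hf : AEStronglyMeasurable f μ)
    (h : Integrable (fun ω => |f ω| ^ (2 * p)) μ) :
    MemLp (fun ω => f ω ^ 2) (ENNReal.ofReal p) μ := by
  refine memLp_of_integrable_abs_rpow hp (hf.pow 2) ?_
  simpa only [rpow_mul (abs_nonneg _), rpow_two, abs_pow] using h

lemma memLp_two_of_integrable_abs_rpow [IsFiniteMeasure μ] {f : Ω → ℝ} (hp : 1 ≤ p)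
    (hf : AEStronglyMeasurable f μ) (h : Integrable (fun ω => |f ω| ^ (2 * p)) μ) :
    MemLp f 2 μ := by
  refine (memLp_two_iff_integrable_sq hf).2 ?_
  exact (memLp_sq_of_integrable_abs_rpow (zero_lt_one.trans_le hp) hf h).integrable
    (ENNReal.one_le_ofReal.2 hp)

lemma ae_forall_condExp_sq_nonneg :
    ∀ᵐ ω ∂μ, ∀ i, 0 ≤ (μ[fun ω => Y i ω ^ 2 | ℱ i]) ω :=
  ae_all_iff.2 fun _ => condExp_nonneg (ae_of_all _ fun _ => sq_nonneg _)

lemma isMartingaleDifference_condExp_sq_sup_zero (hYm : ∀ i, Measurable[ℱ (i + 1)] (Y i))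
    (hY2 : ∀ i, MemLp (Y i) 2 μ) (hY0 : ∀ i, μ[Y i | ℱ i] =ᵐ[μ] 0) :
    IsMartingaleDifference μ ℱ Y (fun i => μ[fun ω => Y i ω ^ 2 | ℱ i] ⊔ 0) where
  measurable_diff' := hYm
  memLp_two := hY2
  condExp_diff := hY0
  measurable_var' _ := stronglyMeasurable_condExp.measurable.sup measurable_const
  var_nonneg _ _ := le_sup_right
  condExp_sq i := by
    filter_upwards [ae_forall_condExp_sq_nonneg (μ := μ) (ℱ := ℱ) (Y := Y)] with ω hω
    exact (sup_eq_left.2 (hω i)).symm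

lemma integrable_abs_sum_condExp_sq_sub_one_rpow [IsFiniteMeasure μ] (hp : 1 ≤ p)
    (hYm : ∀ i, AEStronglyMeasurable (Y i) μ)
    (hYp : ∀ i, Integrable (fun ω => |Y i ω| ^ (2 * p)) μ) (n : ℕ) :
    Integrable (fun ω => |partialSum (fun i => μ[fun ω => Y i ω ^ 2 | ℱ i]) n ω - 1| ^ p) μ := by
  have hp0 : 0 < p := zero_lt_one.trans_le hp
  have hvar : MemLp (partialSum (fun i => μ[fun ω => Y i ω ^ 2 | ℱ i]) n) (ENNReal.ofReal p) μ :=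
    memLp_finsetSum _ fun i _ => MemLp.condExp (ENNReal.one_le_ofReal.2 hp)
      (memLp_sq_of_integrable_abs_rpow hp0 (hYm i) (hYp i))
  have := (hvar.sub (memLp_const 1)).integrable_norm_rpow (by simpa using hp0)
    ENNReal.ofReal_ne_top
  rwa [ENNReal.toReal_ofReal hp0.le] at this

lemma measureReal_sq_lt_abs_le [IsFiniteMeasure μ] {f : Ω → ℝ} {ε : ℝ} (hp : 0 < p) (hε : 0 < ε)
    (hf : Integrable (fun ω => |f ω| ^ p) μ) (hfε : ∫ ω, |f ω| ^ p ∂μ ≤ ε ^ (2 * p + 1)) :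
    μ.real {ω | ε ^ 2 < |f ω|} ≤ ε :=
  calc μ.real {ω | ε ^ 2 < |f ω|} ≤ μ.real {ω | ε ^ (2 * p) < |f ω| ^ p} := by
        refine measureReal_mono fun ω (hω : ε ^ 2 < |f ω|) => ?_
        change ε ^ (2 * p) < |f ω| ^ p
        rw [rpow_mul hε.le, rpow_two]
        exact rpow_lt_rpow (by positivity) hω hp
    _ ≤ (∫ ω, |f ω| ^ p ∂μ) / ε ^ (2 * p) :=
        measureReal_lt_le_integral_div (fun ω => by positivity) hf (by positivity)
    _ ≤ ε := by
        rwa [div_le_iff₀ (by positivity), ← rpow_one_add' hε.le (by positivity), add_comm]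

lemma abs_measureReal_normalized_sub_stdNormalCDF_le_rpow [IsProbabilityMeasure μ] (hp : 1 < p)
    (hYm : ∀ i, Measurable[ℱ (i + 1)] (Y i)) (hY0 : ∀ i, μ[Y i | ℱ i] =ᵐ[μ] 0)
    (hYp : ∀ i, Integrable (fun ω => |Y i ω| ^ (2 * p)) μ) (n : ℕ) {t₁ t₂ : ℝ}
    (ht₁ : 0 ≤ t₁) (ht₂ : 0 ≤ t₂) (ht : t₁ + t₂ ≤ 1) (x : ℝ) :
    |μ.real {ω | partialSum Y n ω ≤
        x * √(t₁ * partialSum (fun i => μ[fun ω => Y i ω ^ 2 | ℱ i]) n ω +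
          t₂ * partialSum (fun i ω => Y i ω ^ 2) n ω + (1 - t₁ - t₂))} - Φ x| ≤
      berryEsseenConst p.conjExponent * ((∑ i ∈ range n, ∫ ω, |Y i ω| ^ (2 * p) ∂μ) +
        ∫ ω, |partialSum (fun i => μ[fun ω => Y i ω ^ 2 | ℱ i]) n ω - 1| ^ p ∂μ) ^
          (1 / (2 * p + 1)) := by
  have hpq := HolderConjugate.conjExponent hp
  have hYm' (i : ℕ) : AEStronglyMeasurable (Y i) μ :=
    ((hYm i).mono (ℱ.le _) le_rfl).aestronglyMeasurable
  set V := partialSum (fun i => μ[fun ω => Y i ω ^ 2 | ℱ i]) n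
  have hmom : 0 ≤ ∑ i ∈ range n, ∫ ω, |Y i ω| ^ (2 * p) ∂μ :=
    sum_nonneg fun i _ => integral_nonneg fun ω => by positivity
  have hdev : 0 ≤ ∫ ω, |V ω - 1| ^ p ∂μ := integral_nonneg fun ω => by positivity
  have hvar : partialSum (fun i => μ[fun ω => Y i ω ^ 2 | ℱ i] ⊔ 0) n =ᵐ[μ] V := by
    filter_upwards [ae_forall_condExp_sq_nonneg (μ := μ) (ℱ := ℱ) (Y := Y)] with ω hω
    exact sum_congr rfl fun i _ => sup_eq_left.2 (hω i)
  refine le_mul_rpow_of_forall_pos (by linarith) (berryEsseenConst_pos hpq.symm.lt)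
    (add_nonneg hmom hdev) fun ε hε hN => ?_
  have hMarkov := measureReal_sq_lt_abs_le hpq.pos hε
    (integrable_abs_sum_condExp_sq_sub_one_rpow hp.le hYm' hYp n)
    ((le_add_of_nonneg_left hmom).trans hN)
  have hmds := isMartingaleDifference_condExp_sq_sup_zero hYm
    (fun i => memLp_two_of_integrable_abs_rpow hp.le (hYm' i) (hYp i)) hY0
  convert hmds.abs_measureReal_normalized_sub_stdNormalCDF_le hpq hε hYp
    ((le_add_of_nonneg_right hdev).trans hN) ?_ ht₁ ht₂ ht x using 3
  · refine measureReal_congr (eventuallyEq_set.2 ?_)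
    filter_upwards [hvar] with ω hω
    simp only [hω]
  · refine le_trans (measureReal_congr (eventuallyEq_set.2 ?_)).le hMarkov
    filter_upwards [hvar] with ω hω
    simp only [hω, V]

end ConditionalVariance

section Reindexing

variable {Ω : Type*} {mΩ : MeasurableSpace Ω} {μ : Measure Ω} {ℱ : Filtration ℕ mΩ}
  {X : ℕ → Ω → ℝ} {p : ℝ} {n : ℕ}

/-- The differences `X 1, …, X n` reindexed from zero and continued by zero, so that conditions
imposed up to time `n` hold at all times. -/
def shiftedDiff (X : ℕ → Ω → ℝ) (n i : ℕ) : Ω → ℝ :=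
  if i < n then X (i + 1) else 0

lemma sum_Icc_one_eq_sum_range (f : ℕ → ℝ) (n : ℕ) :
    ∑ i ∈ Icc 1 n, f i = ∑ i ∈ range n, f (i + 1) := by
  rw [range_eq_Ico, sum_Ico_add' f 0 n 1]
  rfl

lemma shiftedDiff_induction {P : ℕ → (Ω → ℝ) → Prop} (hX : ∀ i ∈ Icc 1 n, P (i - 1) (X i))
    (h0 : ∀ i, P i 0) (i : ℕ) : P i (shiftedDiff X n i) := by
  unfold shiftedDiff
  split_ifs with h
  · exact hX (i + 1) (mem_Icc.2 (by omega))
  · exact h0 i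

lemma sum_Icc_eq_sum_range_shiftedDiff (F : ℕ → (Ω → ℝ) → ℝ) :
    ∑ i ∈ Icc 1 n, F (i - 1) (X i) = ∑ i ∈ range n, F i (shiftedDiff X n i) := by
  rw [sum_Icc_one_eq_sum_range]
  refine sum_congr rfl fun i hi => ?_
  rw [shiftedDiff, if_pos (mem_range.1 hi), Nat.add_sub_cancel]

end Reindexing

end MartingaleBerryEsseen

open MartingaleBerryEsseen in
theorem stmt0_general (p : ℝ) (hp : 1 < p) :
    ∃ C : ℝ, 0 < C ∧
      ∀ (Ω : Type*) (mΩ : MeasurableSpace Ω) (μ : Measure Ω),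
        IsProbabilityMeasure μ →
        ∀ (ℱ : Filtration ℕ mΩ) (n : ℕ) (X : ℕ → Ω → ℝ),
        (∀ i ∈ Icc 1 n, StronglyMeasurable[ℱ i] (X i)) →
        (∀ i ∈ Icc 1 n, μ[X i | ℱ (i - 1)] =ᵐ[μ] 0) →
        (∀ i ∈ Icc 1 n, Integrable (fun ω => |X i ω| ^ (2 * p)) μ) →
        ∀ S QV CV : Ω → ℝ,
          (∀ ω, S ω = ∑ i ∈ Icc 1 n, X i ω) →
          (∀ ω, QV ω = ∑ i ∈ Icc 1 n, X i ω ^ 2) →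
          (∀ ω, CV ω = ∑ i ∈ Icc 1 n, (μ[fun ω' => X i ω' ^ 2 | ℱ (i - 1)]) ω) →
        ∀ N : ℝ,
          N = (∑ i ∈ Icc 1 n, ∫ ω, |X i ω| ^ (2 * p) ∂μ) + ∫ ω, |CV ω - 1| ^ p ∂μ →
      ∀ t₁ t₂ : ℝ, 0 ≤ t₁ → 0 ≤ t₂ → t₁ + t₂ ≤ 1 →
      ∀ x : ℝ,
        |(μ {ω | S ω ≤ x * √(t₁ * CV ω + t₂ * QV ω + (1 - t₁ - t₂))}).toReal
          - stdNormalCDF x| ≤ C * N ^ (1 / (2 * p + 1)) := by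
  have hq := (Real.HolderConjugate.conjExponent hp).symm.lt
  refine ⟨berryEsseenConst p.conjExponent, berryEsseenConst_pos hq, ?_⟩
  intro Ω mΩ μ _ ℱ n X hXm hX0 hXp S QV CV hS hQV hCV N hN t₁ t₂ ht₁ ht₂ ht x
  have hYm : ∀ i, Measurable[ℱ (i + 1)] (shiftedDiff X n i) :=
    shiftedDiff_induction (P := fun i f => Measurable[ℱ (i + 1)] f)
      (fun i hi => by
        rw [Nat.sub_add_cancel (mem_Icc.1 hi).1]
        exact (hXm i hi).measurable)
      fun _ => measurable_const
  have hY0 : ∀ i, μ[shiftedDiff X n i | ℱ i] =ᵐ[μ] 0 :=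
    shiftedDiff_induction (P := fun i f => μ[f | ℱ i] =ᵐ[μ] 0) hX0 fun _ => by rw [condExp_zero]
  have hYp : ∀ i, Integrable (fun ω => |shiftedDiff X n i ω| ^ (2 * p)) μ :=
    shiftedDiff_induction (P := fun _ f => Integrable (fun ω => |f ω| ^ (2 * p)) μ) hXp
      fun _ => by simp [Real.zero_rpow (by linarith : 2 * p ≠ 0)]
  have hSY : S = partialSum (shiftedDiff X n) n :=
    funext fun ω => (hS ω).trans (sum_Icc_eq_sum_range_shiftedDiff fun _ f => f ω)
  have hQVY : QV = partialSum (fun i ω => shiftedDiff X n i ω ^ 2) n :=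
    funext fun ω => (hQV ω).trans (sum_Icc_eq_sum_range_shiftedDiff fun _ f => f ω ^ 2)
  have hCVY : CV = partialSum (fun i => μ[fun ω => shiftedDiff X n i ω ^ 2 | ℱ i]) n :=
    funext fun ω => (hCV ω).trans
      (sum_Icc_eq_sum_range_shiftedDiff fun i f => (μ[fun ω' => f ω' ^ 2 | ℱ i]) ω)
  rw [hN, sum_Icc_eq_sum_range_shiftedDiff fun _ f => ∫ ω, |f ω| ^ (2 * p) ∂μ, hSY, hQVY, hCVY]
  exact abs_measureReal_normalized_sub_stdNormalCDF_le_rpow hp hYm hY0 hYp n ht₁ ht₂ ht x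

theorem stmt0 (p : ℝ) (hp : 1 < p) :
    ∃ C : ℝ, 0 < C ∧
      ∀ (Ω : Type) (mΩ : MeasurableSpace Ω) (μ : Measure Ω),
        IsProbabilityMeasure μ →
        ∀ (ℱ : Filtration ℕ mΩ), ℱ 0 = ⊥ →
        ∀ (n : ℕ) (X : ℕ → Ω → ℝ), X 0 = 0 →
        (∀ i, StronglyMeasurable[ℱ i] (X i)) →
        (∀ i, Integrable (X i) μ) →
        (∀ i ∈ Finset.Icc 1 n, μ[X i | ℱ (i - 1)] =ᵐ[μ] (0 : Ω → ℝ)) →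
        ∀ (S : ℕ → Ω → ℝ), (∀ k ω, S k ω = ∑ i ∈ Finset.Icc 1 k, X i ω) →
        ∀ (QV CV : Ω → ℝ),
          (∀ ω, QV ω = ∑ i ∈ Finset.Icc 1 n, (X i ω) ^ 2) →
          (∀ ω, CV ω = ∑ i ∈ Finset.Icc 1 n, (μ[fun ω' => (X i ω') ^ 2 | ℱ (i - 1)]) ω) →
        (∫ ω, (S n ω) ^ 2 ∂μ) = 1 →
        (∀ i ∈ Finset.Icc 1 n, Integrable (fun ω => |X i ω| ^ (2 * p)) μ) →
        ∀ (N : ℝ),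
          N = (∑ i ∈ Finset.Icc 1 n, ∫ ω, |X i ω| ^ (2 * p) ∂μ) + (∫ ω, |CV ω - 1| ^ p ∂μ) →
      ∀ t1 t2 : ℝ, 0 ≤ t1 → 0 ≤ t2 → t1 ≤ 1 → t2 ≤ 1 → t1 + t2 ≤ 1 →
      ∀ x : ℝ,
        |(μ {ω | S n ω ≤ x * Real.sqrt (t1 * CV ω + t2 * QV ω + (1 - t1 - t2))}).toReal
          - stdNormalCDF x| ≤ C * N ^ (1 / (2 * p + 1)) := by
  obtain ⟨C, hC, hbound⟩ := stmt0_general p hp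
  exact ⟨C, hC, fun Ω mΩ μ hμ ℱ _ n X _ hXm _ hX0 S hS QV CV hQV hCV _ hXp N hN t1 t2 ht1 ht2 _ _ =>
    hbound Ω mΩ μ hμ ℱ n X (fun i _ => hXm i) hX0 hXp (S n) QV CV (hS n) hQV hCV N hN t1 t2 ht1 ht2⟩
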